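/- arXiv:2604.11084 — 2 statements merged into one kernel-verified Lean document; each statement's English description precedes it below -/
import Mathlib

section
/- Let ρ̄ be a probability density on 𝕋^d and φ a bounded measurable function on 𝕋^{3d} satisfying the two cancellations ∫ φ(x,z,z') ρ̄(x) dx = 0 for all z,z' and ∫∫ φ(x,z,z') ρ̄(z) ρ̄(z') dz dz' = 0 for all x. If 4 ≤ 4m ≤ N, then (1/(2m)!) ∫_{𝕋^{dN}} ρ̄_N (N^{−2} ∑_{i,j,k=1}^N φ(x_i,x_j,x_k))^{2m} dX ≤ 2 m^2 ( √(32 e^3) · sup_{p≥1} M_p/p )^{2m}, where M_p = ‖ sup_{z,z'}|φ(·,z,z')| ‖_{L^p(ρ̄ dx)}. -/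
open MeasureTheory

/-- The `d`-dimensional torus `𝕋^d = [0,1]^d`. -/
abbrev Torus (d : ℕ) := Fin d → AddCircle (1 : ℝ)

/-- `M_p = ‖ sup_{z,z'} |φ(·,z,z')| ‖_{L^p(ρ̄ dx)}`. -/
noncomputable def Mp {d : ℕ} (ρ : Torus d → ℝ) (φ : Torus d → Torus d → Torus d → ℝ)
    (p : ℝ) : ℝ :=
  (∫ x : Torus d, (⨆ z, ⨆ z', |φ x z z'|) ^ p * ρ x) ^ (1 / p)

/-- `sup_{p ≥ 1} M_p / p`. -/
noncomputable def Msup {d : ℕ} (ρ : Torus d → ℝ)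
    (φ : Torus d → Torus d → Torus d → ℝ) : ℝ :=
  ⨆ p : {p : ℝ // 1 ≤ p}, Mp ρ φ (p : ℝ) / (p : ℝ)


/-- multiplicity of the letter `a` in the word `f` -/
def cnt {n N : ℕ} (f : Fin n → Fin N) (a : Fin N) : ℕ := Fintype.card {l // f l = a}

lemma card_words {n N : ℕ} (α : Fin N → ℕ) :
    (Finset.univ.filter (fun f : Fin n → Fin N => cnt f = α)).card * ∏ a, (α a).factorial
      ≤ n.factorial := by
  classical
  rcases (Finset.univ.filter (fun f : Fin n → Fin N => cnt f = α)).eq_empty_or_nonempty with h | h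
  · rw [h]; simp
  obtain ⟨f0, hf0⟩ := h
  have hf0' : cnt f0 = α := by simpa using hf0
  have hstab := DomMulAct.stabilizer_card (f := f0)
  have h1 : ∏ a, (α a).factorial = Fintype.card {g : Equiv.Perm (Fin n) // f0 ∘ g = f0} := by
    rw [hstab, ← hf0']; rfl
  have hτ : ∀ f : Fin n → Fin N, cnt f = α → ∃ τ : Equiv.Perm (Fin n), f0 ∘ τ = f := by
    intro f hf
    have he : ∀ c, Nonempty ({a // f a = c} ≃ {b // f0 b = c}) := by
      intro c
      have := congrFun (hf.trans hf0'.symm) c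
      exact ⟨Fintype.equivOfCardEq this⟩
    refine ⟨Equiv.ofFiberEquiv (fun c => (he c).some), ?_⟩
    funext l
    exact Equiv.ofFiberEquiv_map _ l
  choose! τ hτ using hτ
  rw [h1, ← Fintype.card_coe, ← Fintype.card_prod]
  have h2 : Fintype.card (Equiv.Perm (Fin n)) = n.factorial := by
    rw [Fintype.card_perm, Fintype.card_fin]
  rw [← h2]
  refine Fintype.card_le_of_injective (fun p => p.2.1 * τ p.1.1) ?_
  rintro ⟨⟨f, hf⟩, ⟨g, hg⟩⟩ ⟨⟨f', hf'⟩, ⟨g', hg'⟩⟩ heq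
  have hf1 := hτ f (by simpa using hf)
  have hf1' := hτ f' (by simpa using hf')
  simp only at heq
  have : f = f' := by
    rw [← hf1, ← hf1']
    funext l
    have e := congrArg (fun s : Equiv.Perm (Fin n) => f0 (s l)) heq
    simp only [Equiv.Perm.mul_apply] at e
    have a1 := congrFun hg (τ f l)
    have a2 := congrFun hg' (τ f' l)
    simp only [Function.comp] at a1 a2 ⊢
    rw [← a1, ← a2, e]
  subst this
  have : g = g' := mul_right_cancel heq
  subst this
  rfl

/-- Chernoff type bound for a weighted sum over pairs of words -/
lemma words_bound {n N : ℕ} (g : ℕ → ℕ → ℝ) (hg : ∀ k l, 0 ≤ g k l) {x z : ℝ}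
    (hx : 0 < x) (hz : 0 < z) :
    ∑ I : Fin n → Fin N, ∑ B : Fin n → Fin N, ∏ a, g (cnt I a) (cnt B a) ≤
      (n.factorial : ℝ) ^ 2 * (x ^ n * z ^ n)⁻¹ *
        (∑ k ∈ Finset.range (n + 1), ∑ l ∈ Finset.range (n + 1),
          g k l * (x ^ k / k.factorial) * (z ^ l / l.factorial)) ^ N := by
  classical
  set R := Finset.range (n + 1)
  have hsum : ∀ I : Fin n → Fin N, ∑ a, cnt I a = n := by
    intro I
    have := Finset.card_eq_sum_card_fiberwise (s := Finset.univ) (t := Finset.univ) (f := I)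
      (fun _ _ => by simp)
    simp only [Finset.card_univ, Fintype.card_fin] at this
    refine Eq.trans ?_ this.symm
    refine Finset.sum_congr rfl fun a _ => ?_
    rw [cnt, Fintype.card_subtype]
  have hmem : ∀ I : Fin n → Fin N, cnt I ∈ Fintype.piFinset (fun _ : Fin N => R) := by
    intro I
    rw [Fintype.mem_piFinset]
    intro a
    have : cnt I a ≤ ∑ a, cnt I a := Finset.single_le_sum (f := cnt I) (fun _ _ => Nat.zero_le _) (Finset.mem_univ a)
    rw [hsum] at this
    simp [R]; omega
  -- one word
  have one : ∀ (G : (Fin N → ℕ) → ℝ) (_ : ∀ α, 0 ≤ G α) (y : ℝ) (_ : 0 < y),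
      ∑ I : Fin n → Fin N, G (cnt I) ≤ (n.factorial : ℝ) * (y ^ n)⁻¹ *
        ∑ α ∈ Fintype.piFinset (fun _ : Fin N => R), G α * ∏ a, (y ^ (α a) / (α a).factorial) := by
    intro G hG y hy
    rw [← Finset.sum_fiberwise_of_maps_to (s := Finset.univ) (g := cnt) (fun I _ => hmem I), Finset.mul_sum]
    refine Finset.sum_le_sum fun α _ => ?_
    have e1 : ∑ I ∈ Finset.univ.filter (fun f : Fin n → Fin N => cnt f = α), G (cnt I)
        = (Finset.univ.filter (fun f : Fin n → Fin N => cnt f = α)).card * G α := by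
      rw [Finset.sum_congr rfl (g := fun _ => G α)]
      · simp
      · intro I hI
        rw [(Finset.mem_filter.1 hI).2]
    rw [e1]
    by_cases hα : ∑ a, α a = n
    · have h1 : (∏ a, (y ^ (α a) / ((α a).factorial : ℝ))) = y ^ n * (∏ a, ((α a).factorial : ℝ))⁻¹ := by
        rw [Finset.prod_div_distrib, Finset.prod_pow_eq_pow_sum, hα]; rfl
      rw [h1]
      have h2 : ((Finset.univ.filter (fun f : Fin n → Fin N => cnt f = α)).card : ℝ) * ∏ a, ((α a).factorial : ℝ)
        ≤ n.factorial := by exact_mod_cast card_words α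
      have h3 : (0 : ℝ) < ∏ a, ((α a).factorial : ℝ) :=
        Finset.prod_pos fun a _ => by exact_mod_cast Nat.factorial_pos _
      have h4 : ((Finset.univ.filter (fun f : Fin n → Fin N => cnt f = α)).card : ℝ) ≤
          n.factorial * (∏ a, ((α a).factorial : ℝ))⁻¹ := by
        rw [← div_eq_mul_inv, le_div_iff₀ h3]; exact h2
      calc _ ≤ (n.factorial * (∏ a, ((α a).factorial : ℝ))⁻¹) * G α :=
            mul_le_mul_of_nonneg_right h4 (hG α)
        _ = _ := by field_simp
    · have : (Finset.univ.filter (fun f : Fin n → Fin N => cnt f = α)) = ∅ := by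
        rw [Finset.filter_eq_empty_iff]
        rintro I - rfl
        exact hα (hsum I)
      rw [this]
      simp only [Finset.card_empty, Nat.cast_zero, zero_mul]
      have := hG α
      positivity
  calc ∑ I : Fin n → Fin N, ∑ B : Fin n → Fin N, ∏ a, g (cnt I a) (cnt B a)
      ≤ (n.factorial : ℝ) * (x ^ n)⁻¹ *
        ∑ α ∈ Fintype.piFinset (fun _ : Fin N => R),
          (∑ B : Fin n → Fin N, ∏ a, g (α a) (cnt B a)) * ∏ a, (x ^ (α a) / (α a).factorial) :=
        one (fun α => ∑ B : Fin n → Fin N, ∏ a, g (α a) (cnt B a))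
          (fun α => Finset.sum_nonneg fun B _ => Finset.prod_nonneg fun a _ => hg _ _) x hx
    _ ≤ (n.factorial : ℝ) * (x ^ n)⁻¹ *
        ∑ α ∈ Fintype.piFinset (fun _ : Fin N => R),
          ((n.factorial : ℝ) * (z ^ n)⁻¹ *
        ∑ β ∈ Fintype.piFinset (fun _ : Fin N => R), (∏ a, g (α a) (β a)) *
          ∏ a, (z ^ (β a) / (β a).factorial)) * ∏ a, (x ^ (α a) / (α a).factorial) := by
        gcongr with α hα
        exact one (fun β => ∏ a, g (α a) (β a)) (fun β => Finset.prod_nonneg fun a _ => hg _ _) z hz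
    _ = (n.factorial : ℝ) ^ 2 * (x ^ n * z ^ n)⁻¹ *
        ∑ α ∈ Fintype.piFinset (fun _ : Fin N => R), ∑ β ∈ Fintype.piFinset (fun _ : Fin N => R),
          ∏ a, (g (α a) (β a) * (x ^ (α a) / (α a).factorial) * (z ^ (β a) / (β a).factorial)) := by
        simp only [Finset.mul_sum, Finset.sum_mul, Finset.prod_mul_distrib]
        refine Finset.sum_congr rfl fun α _ => Finset.sum_congr rfl fun β _ => ?_
        rw [mul_inv]; ring
    _ = _ := by
        congr 1
        have e2 : ∀ α : Fin N → ℕ, ∑ β ∈ Fintype.piFinset (fun _ : Fin N => R),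
          ∏ a, (g (α a) (β a) * (x ^ (α a) / (α a).factorial) * (z ^ (β a) / (β a).factorial)) =
          ∏ a, ∑ l ∈ R, (g (α a) l * (x ^ (α a) / (α a).factorial) * (z ^ l / l.factorial)) := by
          intro α
          rw [Finset.prod_univ_sum]
        simp only [e2]
        rw [← Finset.prod_univ_sum (fun _ => R) (fun _ k => ∑ l ∈ R, (g k l * (x ^ k / k.factorial) * (z ^ l / l.factorial)))]
        simp

/-- number of words covering a given set of letters -/
lemma cover_bound {n N : ℕ} (hN : 0 < N) (Z : Finset (Fin N)) :
    ((Finset.univ.filter (fun F : Fin n → Fin N => ∀ a ∈ Z, ∃ l, F l = a)).card : ℝ)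
      ≤ (N : ℝ) ^ n * ((n : ℝ) / N) ^ Z.card := by
  classical
  have hNr : (0 : ℝ) < N := by exact_mod_cast hN
  have hsub : Finset.univ.filter (fun F : Fin n → Fin N => ∀ a ∈ Z, ∃ l, F l = a) ⊆
      Finset.univ.biUnion (fun e : Z → Fin n =>
        Finset.univ.filter (fun F : Fin n → Fin N => ∀ a : Z, F (e a) = a)) := by
    intro F hF
    simp only [Finset.mem_filter, Finset.mem_univ, true_and, Finset.mem_biUnion] at hF ⊢
    choose e he using fun a : Z => hF a.1 a.2
    exact ⟨e, he⟩
  have hcard : ∀ e : Z → Fin n,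
      ((Finset.univ.filter (fun F : Fin n → Fin N => ∀ a : Z, F (e a) = a)).card : ℝ) ≤
        (N : ℝ) ^ n * (1 / N) ^ Z.card := by
    intro e
    by_cases he : Function.Injective e
    · have h1 : Finset.univ.filter (fun F : Fin n → Fin N => ∀ a : Z, F (e a) = a) ⊆
          Fintype.piFinset (fun l : Fin n =>
            Finset.univ.filter (fun b : Fin N => ∀ a : Z, e a = l → b = a)) := by
        intro F hF
        simp only [Finset.mem_filter, Finset.mem_univ, true_and, Fintype.mem_piFinset] at hF ⊢
        rintro l a rfl
        exact hF a
      have h2 := Finset.card_le_card h1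
      rw [Fintype.card_piFinset] at h2
      have h3 : (((∏ l : Fin n, (Finset.univ.filter (fun b : Fin N => ∀ a : Z, e a = l → b = a)).card) : ℕ) : ℝ)
          ≤ ∏ l : Fin n, (N * (if l ∈ Finset.univ.image e then (1 / N : ℝ) else 1)) := by
        push_cast
        refine Finset.prod_le_prod (fun _ _ => by positivity) fun l _ => ?_
        split_ifs with hl
        · obtain ⟨a, -, rfl⟩ := Finset.mem_image.1 hl
          have : (Finset.univ.filter (fun b : Fin N => ∀ a' : Z, e a' = e a → b = a')).card ≤ 1 := by
            rw [Finset.card_le_one]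
            intro b hb c hc
            simp only [Finset.mem_filter, Finset.mem_univ, true_and] at hb hc
            rw [hb a rfl, hc a rfl]
          have h' : ((Finset.univ.filter (fun b : Fin N => ∀ a' : Z, e a' = e a → b = a')).card : ℝ) ≤ 1 := by
            exact_mod_cast this
          refine h'.trans (le_of_eq ?_)
          field_simp
        · have := Finset.card_le_univ (Finset.univ.filter (fun b : Fin N => ∀ a : Z, e a = l → b = a))
          rw [Fintype.card_fin] at this
          simpa using (by exact_mod_cast this : ((Finset.univ.filter (fun b : Fin N => ∀ a : Z, e a = l → b = a)).card : ℝ) ≤ N)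
      have h4 : ∏ l : Fin n, ((N : ℝ) * (if l ∈ Finset.univ.image e then (1 / N : ℝ) else 1)) =
          (N : ℝ) ^ n * (1 / N) ^ Z.card := by
        rw [Finset.prod_mul_distrib, Finset.prod_ite_mem]
        simp only [Finset.univ_inter, Finset.prod_const]
        rw [Finset.card_image_of_injective _ he]
        simp
      calc _ ≤ _ := by exact_mod_cast h2
        _ ≤ _ := h3
        _ = _ := h4
    · have : Finset.univ.filter (fun F : Fin n → Fin N => ∀ a : Z, F (e a) = a) = ∅ := by
        rw [Finset.filter_eq_empty_iff]
        intro F _ hF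
        apply he
        intro a b hab
        apply Subtype.ext
        rw [← hF a, ← hF b, hab]
      rw [this]
      simp only [Finset.card_empty, Nat.cast_zero]
      positivity
  calc ((Finset.univ.filter (fun F : Fin n → Fin N => ∀ a ∈ Z, ∃ l, F l = a)).card : ℝ)
      ≤ ((Finset.univ.biUnion (fun e : Z → Fin n =>
        Finset.univ.filter (fun F : Fin n → Fin N => ∀ a : Z, F (e a) = a))).card : ℝ) := by
        exact_mod_cast Finset.card_le_card hsub
    _ ≤ ∑ e : Z → Fin n, ((Finset.univ.filter (fun F : Fin n → Fin N => ∀ a : Z, F (e a) = a)).card : ℝ) := by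
        exact_mod_cast Finset.card_biUnion_le
    _ ≤ ∑ e : Z → Fin n, (N : ℝ) ^ n * (1 / N) ^ Z.card := Finset.sum_le_sum fun e _ => hcard e
    _ = _ := by
        simp only [Finset.sum_const, Finset.card_univ, Fintype.card_fun, Fintype.card_fin,
          Fintype.card_coe, nsmul_eq_mul]
        push_cast
        rw [div_pow, div_pow]; ring


lemma succ_pow_le (k : ℕ) : ((k : ℝ) + 1) ^ k ≤ Real.exp 1 * (k : ℝ) ^ k := by
  rcases Nat.eq_zero_or_pos k with rfl | hk
  · simp
  have hk' : (0 : ℝ) < k := by exact_mod_cast hk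
  have h1 : (1 : ℝ) / k + 1 ≤ Real.exp (1 / k) := Real.add_one_le_exp _
  have h2 : ((1 : ℝ) / k + 1) ^ k ≤ Real.exp (1 / k) ^ k := pow_le_pow_left₀ (by positivity) h1 k
  rw [← Real.exp_nat_mul, mul_one_div_cancel hk'.ne'] at h2
  calc ((k : ℝ) + 1) ^ k = ((1 : ℝ) / k + 1) ^ k * (k : ℝ) ^ k := by
        rw [← mul_pow]; congr 1; field_simp; ring
    _ ≤ _ := by gcongr

/-- `k^k ≤ e^{k-1} k!` for `k ≥ 1` -/
lemma pow_self_le (k : ℕ) :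
    ((k + 1 : ℕ) : ℝ) ^ (k + 1) ≤ Real.exp 1 ^ k * ((k + 1).factorial : ℝ) := by
  induction k with
  | zero => simp
  | succ k ih =>
    have h := succ_pow_le (k + 1)
    rw [Nat.factorial_succ (k + 1)]
    push_cast at *
    calc ((k : ℝ) + 1 + 1) ^ (k + 1 + 1) = ((k : ℝ) + 1 + 1) * ((k : ℝ) + 1 + 1) ^ (k + 1) := by ring
      _ ≤ ((k : ℝ) + 1 + 1) * (Real.exp 1 * ((k : ℝ) + 1) ^ (k + 1)) := by gcongr
      _ ≤ ((k : ℝ) + 1 + 1) * (Real.exp 1 * (Real.exp 1 ^ k * ((k + 1).factorial : ℝ))) := by gcongr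
      _ = _ := by ring

/-- `n! (e/n)^n ≤ e² n² / 8` for `n ≥ 2` -/
lemma factorial_upper (n : ℕ) (hn : 2 ≤ n) :
    (n.factorial : ℝ) * (Real.exp 1 / n) ^ n ≤ Real.exp 1 ^ 2 * (n : ℝ) ^ 2 / 8 := by
  induction n, hn using Nat.le_induction with
  | base =>
    rw [show (2 : ℕ).factorial = 2 from rfl]
    push_cast
    apply le_of_eq
    ring
  | succ n hn ih =>
    have hn' : (0 : ℝ) < n := by positivity
    have he := Real.exp_pos 1
    -- e n^(n+2) ≤ (n+1)^(n+2)
    have key : Real.exp 1 * (n : ℝ) ^ (n + 2) ≤ ((n : ℝ) + 1) ^ (n + 2) := by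
      have h1 : 1 - 1 / ((n : ℝ) + 1) ≤ Real.exp (-(1 / ((n : ℝ) + 1))) := by
        have := Real.add_one_le_exp (-(1 / ((n : ℝ) + 1)))
        linarith
      have h0 : 1 - 1 / ((n : ℝ) + 1) = n / (n + 1) := by field_simp; ring
      rw [h0] at h1
      have h2 : ((n : ℝ) / (n + 1)) ^ (n + 1) ≤ Real.exp (-(1 / ((n : ℝ) + 1))) ^ (n + 1) :=
        pow_le_pow_left₀ (by positivity) h1 _
      rw [← Real.exp_nat_mul] at h2
      have h3 : ((n + 1 : ℕ) : ℝ) * -(1 / ((n : ℝ) + 1)) = -1 := by push_cast; field_simp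
      rw [h3, Real.exp_neg, div_pow, div_le_iff₀ (by positivity)] at h2
      have h4 : Real.exp 1 * (n : ℝ) ^ (n + 1) ≤ ((n : ℝ) + 1) ^ (n + 1) := by
        calc _ ≤ Real.exp 1 * ((Real.exp 1)⁻¹ * ((n : ℝ) + 1) ^ (n + 1)) := by gcongr
          _ = _ := by field_simp
      calc Real.exp 1 * (n : ℝ) ^ (n + 2) = (Real.exp 1 * (n : ℝ) ^ (n + 1)) * n := by ring
        _ ≤ ((n : ℝ) + 1) ^ (n + 1) * (n + 1) := by gcongr; linarith
        _ = _ := by ring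
    rw [div_pow, ← mul_div_assoc, div_le_iff₀ (by positivity)] at ih
    rw [div_pow, ← mul_div_assoc, div_le_iff₀ (by positivity), Nat.factorial_succ]
    push_cast
    calc ((n : ℝ) + 1) * n.factorial * Real.exp 1 ^ (n + 1)
        = ((n : ℝ) + 1) * Real.exp 1 * (n.factorial * Real.exp 1 ^ n) := by ring
      _ ≤ ((n : ℝ) + 1) * Real.exp 1 * (Real.exp 1 ^ 2 * (n : ℝ) ^ 2 / 8 * n ^ n) := by gcongr
      _ = Real.exp 1 ^ 2 / 8 * ((n : ℝ) + 1) * (Real.exp 1 * (n : ℝ) ^ (n + 2)) := by ring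
      _ ≤ Real.exp 1 ^ 2 / 8 * ((n : ℝ) + 1) * ((n : ℝ) + 1) ^ (n + 2) := by gcongr
      _ = _ := by ring

/-- the site weight -/
noncomputable def gw (u : ℝ) (k l : ℕ) : ℝ :=
  (k : ℝ) ^ k * (if (k = 0 ∧ l = 1) ∨ (k = 1 ∧ l = 0) then u else 1)

lemma H_bound (s : ℝ) (hs : 0 < s) (hs2 : s ^ 2 ≤ 1 / 2) :
    Real.exp (2 / 3 * s) * (1 + (s / 6) / (1 - Real.exp 1 * (s / 6)))
      - (1 - s ^ 2) * (s / 6 + 2 / 3 * s) ≤ Real.exp (s ^ 2) := by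
  have he := Real.exp_one_lt_d9
  have he0 := Real.exp_pos 1
  have hs71 : s ≤ 0.71 := by nlinarith
  have h1 : Real.exp 1 * (s / 6) ≤ 0.3217 := by nlinarith
  have h2 : (s / 6) / (1 - Real.exp 1 * (s / 6)) ≤ s / 6 + 21 / 5 * (s / 6) ^ 2 := by
    rw [div_le_iff₀ (by linarith)]
    have : Real.exp 1 ≤ 21 / 5 * (1 - Real.exp 1 * (s / 6)) := by linarith
    nlinarith [sq_nonneg (s / 6)]
  have h3 : Real.exp (2 / 3 * s) ≤ 1 + (2 / 3 * s) + (2 / 3 * s) ^ 2 / 2 + (2 / 3 * s) ^ 3 / 5 := by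
    have := Real.exp_bound' (x := 2 / 3 * s) (by positivity) (by linarith) (n := 4) (by norm_num)
    simp [Finset.sum_range_succ, Nat.factorial] at this
    have h4 : (2 / 3 * s) ^ 4 ≤ (2 / 3 * s) ^ 3 * (1 / 2) := by
      rw [pow_succ (2 / 3 * s) 3]
      gcongr
      linarith
    have h5 : 0 ≤ (2 / 3 * s) ^ 3 := by positivity
    linarith
  have h4 : 1 + s ^ 2 + (s ^ 2) ^ 2 / 2 ≤ Real.exp (s ^ 2) :=
    Real.quadratic_le_exp_of_nonneg (sq_nonneg s)
  refine le_trans ?_ h4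
  have h5 : Real.exp (2 / 3 * s) * (1 + (s / 6) / (1 - Real.exp 1 * (s / 6))) ≤
      (1 + (2 / 3 * s) + (2 / 3 * s) ^ 2 / 2 + (2 / 3 * s) ^ 3 / 5) *
        (1 + (s / 6 + 21 / 5 * (s / 6) ^ 2)) := by
    gcongr
    have : 0 < 1 - Real.exp 1 * (s / 6) := by linarith
    positivity
  refine le_trans (sub_le_sub_right h5 _) ?_
  have h6 : 0 ≤ s ^ 2 * (0.71 - s) := mul_nonneg (sq_nonneg s) (by linarith)
  have h7 : 0 ≤ s ^ 3 * (0.71 - s) := mul_nonneg (by positivity) (by linarith)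
  have h8 : 0 ≤ s ^ 4 * (0.71 - s) := mul_nonneg (by positivity) (by linarith)
  have h9 : 0 ≤ s ^ 2 * (0.71 - s) ^ 2 := by positivity
  nlinarith [sq_nonneg s]

lemma site_sum (n : ℕ) (hn : 1 ≤ n) (u x z : ℝ) (hx : 0 < x) (hz : 0 < z)
    (hex : Real.exp 1 * x < 1) :
    ∑ k ∈ Finset.range (n + 1), ∑ l ∈ Finset.range (n + 1),
          gw u k l * (x ^ k / k.factorial) * (z ^ l / l.factorial) ≤
    Real.exp z * (1 + x / (1 - Real.exp 1 * x)) - (1 - u) * (x + z) := by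
  have e : ∀ k l : ℕ, gw u k l * (x ^ k / k.factorial) * (z ^ l / l.factorial) =
      ((k : ℝ) ^ k * (x ^ k / k.factorial)) * (z ^ l / l.factorial) -
        (1 - u) * ((if k = 0 then (if l = 1 then z else 0) else 0) +
          (if k = 1 then (if l = 0 then x else 0) else 0)) := by
    intro k l
    unfold gw
    by_cases h1 : k = 0 ∧ l = 1
    · obtain ⟨rfl, rfl⟩ := h1
      simp
      ring
    by_cases h2 : k = 1 ∧ l = 0
    · obtain ⟨rfl, rfl⟩ := h2
      simp
      ring
    have a1 : (if k = 0 then (if l = 1 then z else 0) else 0) = 0 := by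
      split_ifs <;> simp_all
    have a2 : (if k = 1 then (if l = 0 then x else 0) else 0) = 0 := by
      split_ifs <;> simp_all
    rw [a1, a2, if_neg (by tauto)]
    ring
  simp only [e, Finset.sum_sub_distrib, ← Finset.mul_sum, Finset.sum_add_distrib, ← Finset.sum_mul]
  have b1 : ∑ k ∈ Finset.range (n + 1), ∑ l ∈ Finset.range (n + 1),
      (if k = 0 then (if l = 1 then z else 0) else 0) = z := by
    rw [Finset.sum_eq_single 0]
    · simp; omega
    · intro b _ hb; simp [hb]
    · simp
  have b2 : ∑ k ∈ Finset.range (n + 1), ∑ l ∈ Finset.range (n + 1),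
      (if k = 1 then (if l = 0 then x else 0) else 0) = x := by
    rw [Finset.sum_eq_single 1]
    · simp
    · intro b _ hb; simp [hb]
    · simp; omega
  rw [b1, b2]
  have c1 : ∑ l ∈ Finset.range (n + 1), z ^ l / (l.factorial : ℝ) ≤ Real.exp z :=
    Real.sum_le_exp_of_nonneg hz.le _
  have c2 : ∑ k ∈ Finset.range (n + 1), (k : ℝ) ^ k * (x ^ k / k.factorial) ≤
      1 + x / (1 - Real.exp 1 * x) := by
    rw [Finset.sum_range_succ']
    simp only [pow_zero, Nat.factorial_zero, Nat.cast_one, div_one, mul_one]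
    rw [add_comm]
    gcongr
    calc ∑ k ∈ Finset.range n, ((k + 1 : ℕ) : ℝ) ^ (k + 1) * (x ^ (k + 1) / (k + 1).factorial)
        ≤ ∑ k ∈ Finset.range n, x * (Real.exp 1 * x) ^ k := by
          refine Finset.sum_le_sum fun k _ => ?_
          have hf : (0 : ℝ) < (k + 1).factorial := by exact_mod_cast Nat.factorial_pos _
          calc _ ≤ (Real.exp 1 ^ k * ((k + 1).factorial : ℝ)) * (x ^ (k + 1) / (k + 1).factorial) := by
                gcongr; exact pow_self_le k
            _ = _ := by field_simp; ring
      _ ≤ x / (1 - Real.exp 1 * x) := by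
          rw [← Finset.mul_sum, div_eq_mul_inv]
          gcongr
          rw [← tsum_geometric_of_lt_one (by positivity) hex]
          exact (summable_geometric_of_lt_one (by positivity) hex).sum_le_tsum _ (fun _ _ => by positivity)
  have hpos : 0 ≤ 1 + x / (1 - Real.exp 1 * x) := by
    have : 0 < 1 - Real.exp 1 * x := by linarith
    positivity
  have : (∑ k ∈ Finset.range (n + 1), (k : ℝ) ^ k * (x ^ k / k.factorial)) *
      ∑ l ∈ Finset.range (n + 1), z ^ l / (l.factorial : ℝ) ≤ (1 + x / (1 - Real.exp 1 * x)) * Real.exp z :=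
    mul_le_mul c2 c1 (Finset.sum_nonneg fun _ _ => by positivity) hpos
  linarith

lemma final_num (m : ℕ) (hm : 1 ≤ m) :
    (18 : ℝ) ^ (2 * m) * (((2 * m).factorial : ℝ) * (Real.exp 1 / (2 * m : ℕ)) ^ (2 * m)) ≤
      2 * (m : ℝ) ^ 2 * Real.sqrt (32 * Real.exp 1 ^ 3) ^ (2 * m) := by
  have h := factorial_upper (2 * m) (by omega)
  have he0 := Real.exp_pos 1
  rw [pow_mul (Real.sqrt _), Real.sq_sqrt (by positivity), pow_mul]
  have he : 2.7 < Real.exp 1 := by have := Real.exp_one_gt_d9; linarith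
  have hb : (324 : ℝ) ≤ 32 * Real.exp 1 ^ 3 := by
    have : (2.7 : ℝ) ^ 3 ≤ Real.exp 1 ^ 3 := by gcongr
    norm_num at this ⊢
    linarith
  obtain ⟨j, rfl⟩ : ∃ j, m = j + 1 := ⟨m - 1, by omega⟩
  calc ((18 : ℝ) ^ 2) ^ (j + 1) * (((2 * (j + 1)).factorial : ℝ) * (Real.exp 1 / (2 * (j + 1) : ℕ)) ^ (2 * (j + 1)))
      ≤ ((18 : ℝ) ^ 2) ^ (j + 1) * (Real.exp 1 ^ 2 * ((2 * (j + 1) : ℕ) : ℝ) ^ 2 / 8) := by gcongr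
    _ = 324 ^ j * (2 * (((j + 1 : ℕ) : ℝ)) ^ 2) * (81 * Real.exp 1 ^ 2) := by push_cast; ring
    _ ≤ (32 * Real.exp 1 ^ 3) ^ j * (2 * (((j + 1 : ℕ) : ℝ)) ^ 2) * (32 * Real.exp 1 ^ 3) := by
        have h81 : 81 * Real.exp 1 ^ 2 ≤ 32 * Real.exp 1 ^ 3 := by
          have : 0 ≤ Real.exp 1 ^ 2 * (Real.exp 1 - 2.7) := by
            apply mul_nonneg (sq_nonneg _); linarith
          nlinarith [sq_nonneg (Real.exp 1)]
        gcongr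
    _ = _ := by ring


lemma cnt_eq_sum {n N : ℕ} (f : Fin n → Fin N) (a : Fin N) :
    cnt f a = ∑ l, if f l = a then 1 else 0 := by
  rw [cnt, Fintype.card_subtype, Finset.card_filter]

lemma cnt_eq_zero {n N : ℕ} {f : Fin n → Fin N} {a : Fin N} (h : ∀ l, f l ≠ a) : cnt f a = 0 := by
  rw [cnt_eq_sum]; simp [h]

lemma exists_of_cnt {n N : ℕ} {f : Fin n → Fin N} {a : Fin N} (h : cnt f a ≠ 0) : ∃ l, f l = a := by
  by_contra hc
  push Not at hc
  exact h (cnt_eq_zero hc)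

/-- necessary condition for a non-vanishing multi-index triple -/
def NV {n N : ℕ} (I J K : Fin n → Fin N) : Prop :=
  (∀ a, cnt I a = 1 → ¬ (cnt J a = 0 ∧ cnt K a = 0)) ∧
  (∀ l, ¬ ((cnt I (J l) = 0 ∧ cnt J (J l) + cnt K (J l) = 1) ∧
    (cnt I (K l) = 0 ∧ cnt J (K l) + cnt K (K l) = 1)))

def sw {n N : ℕ} (β : Fin n → Bool) (J K : Fin n → Fin N) (l : Fin n) : Fin N :=
  if β l then J l else K l

def DD {n N : ℕ} (I F B : Fin n → Fin N) : Prop :=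
  ∀ a, ((cnt I a = 0 ∧ cnt B a = 1) ∨ (cnt I a = 1 ∧ cnt B a = 0)) → ∃ l, F l = a

lemma cnt_sw {n N : ℕ} (β : Fin n → Bool) (J K : Fin n → Fin N) (a : Fin N) :
    cnt (sw β K J) a + cnt (sw β J K) a = cnt J a + cnt K a := by
  simp only [cnt_eq_sum, ← Finset.sum_add_distrib]
  refine Finset.sum_congr rfl fun l _ => ?_
  unfold sw
  cases β l <;> simp [add_comm]

lemma NV.exists_DD {n N : ℕ} {I J K : Fin n → Fin N} (h : NV I J K) :
    ∃ β : Fin n → Bool, DD I (sw β K J) (sw β J K) := by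
  classical
  refine ⟨fun l => decide (cnt I (K l) = 0 ∧ cnt J (K l) + cnt K (K l) = 1), ?_⟩
  set β : Fin n → Bool := fun l => decide (cnt I (K l) = 0 ∧ cnt J (K l) + cnt K (K l) = 1)
    with hβ
  intro a ha
  by_contra hc
  push Not at hc
  have hF : cnt (sw β K J) a = 0 := cnt_eq_zero hc
  have hs := cnt_sw β J K a
  rcases ha with ⟨h0, h1⟩ | ⟨h0, h1⟩
  · obtain ⟨l, hl⟩ := exists_of_cnt (f := sw β J K) (a := a) (by omega)
    by_cases hb : cnt I (K l) = 0 ∧ cnt J (K l) + cnt K (K l) = 1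
    · have : β l = true := by simp only [hβ]; exact decide_eq_true hb
      simp only [sw, this, if_true] at hl
      refine h.2 l ⟨?_, hb⟩
      rw [hl]
      exact ⟨h0, by omega⟩
    · have : β l = false := by simp only [hβ]; exact decide_eq_false hb
      simp only [sw, this] at hl
      apply hb
      simp only [Bool.false_eq_true, if_false] at hl
      rw [hl]
      exact ⟨h0, by omega⟩
  · exact h.1 a h0 (by omega)

def swEquiv {n N : ℕ} (β : Fin n → Bool) :
    ((Fin n → Fin N) × (Fin n → Fin N)) ≃ ((Fin n → Fin N) × (Fin n → Fin N)) where
  toFun p := (sw β p.2 p.1, sw β p.1 p.2)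
  invFun p := (sw β p.2 p.1, sw β p.1 p.2)
  left_inv p := by
    ext l <;> simp only [sw] <;> cases β l <;> simp
  right_inv p := by
    ext l <;> simp only [sw] <;> cases β l <;> simp

open Classical in
lemma sum_DD {n N : ℕ} (hN : 0 < N) (I B : Fin n → Fin N) :
    ∑ F : Fin n → Fin N, (if DD I F B then ∏ a, ((cnt I a : ℝ) ^ cnt I a) else 0) ≤
      (N : ℝ) ^ n * ∏ a, gw ((n : ℝ) / N) (cnt I a) (cnt B a) := by
  set Z : Finset (Fin N) := Finset.univ.filter
    (fun a => (cnt I a = 0 ∧ cnt B a = 1) ∨ (cnt I a = 1 ∧ cnt B a = 0)) with hZ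
  have h1 := cover_bound (n := n) hN Z
  rw [← Finset.sum_filter, Finset.sum_const, nsmul_eq_mul]
  have h2 : (Finset.univ.filter (fun F : Fin n → Fin N => DD I F B)) =
      (Finset.univ.filter (fun F : Fin n → Fin N => ∀ a ∈ Z, ∃ l, F l = a)) := by
    ext F; simp only [Finset.mem_filter, hZ, Finset.mem_univ, true_and]; rfl
  have h3 : ∏ a, gw ((n : ℝ) / N) (cnt I a) (cnt B a) =
      (∏ a, ((cnt I a : ℝ) ^ cnt I a)) * ((n : ℝ) / N) ^ Z.card := by
    unfold gw
    rw [Finset.prod_mul_distrib]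
    congr 1
    rw [Finset.prod_ite, Finset.prod_const, Finset.prod_const_one, mul_one]
  rw [h2, h3]
  have h4 : 0 ≤ ∏ a, ((cnt I a : ℝ) ^ cnt I a) := Finset.prod_nonneg fun _ _ => by positivity
  calc _ ≤ (N : ℝ) ^ n * ((n : ℝ) / N) ^ Z.card * ∏ a, ((cnt I a : ℝ) ^ cnt I a) := by gcongr
    _ = _ := by ring

open Classical in
lemma total_count {n N : ℕ} (hn : 1 ≤ n) (hN : 2 * n ≤ N) :
    ∑ I : Fin n → Fin N, ∑ J : Fin n → Fin N, ∑ K : Fin n → Fin N,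
      (if NV I J K then ∏ a, ((cnt I a : ℝ) ^ cnt I a) else 0) ≤
    (N : ℝ) ^ (2 * n) * ((n.factorial : ℝ) * (18 ^ n * ((n.factorial : ℝ) * (Real.exp 1 / n) ^ n))) := by
  have hN0 : 0 < N := by omega
  have hNr : (0 : ℝ) < N := by exact_mod_cast hN0
  have hnr : (0 : ℝ) < n := by exact_mod_cast hn
  have hw : ∀ I : Fin n → Fin N, 0 ≤ ∏ a, ((cnt I a : ℝ) ^ cnt I a) :=
    fun I => Finset.prod_nonneg fun _ _ => by positivity
  set w : (Fin n → Fin N) → ℝ := fun I => ∏ a, ((cnt I a : ℝ) ^ cnt I a) with hwdef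
  set u : ℝ := (n : ℝ) / N with hu
  have hu0 : 0 < u := by positivity
  have hu2 : u ≤ 1 / 2 := by
    rw [hu, div_le_iff₀ hNr]
    have : (2 * n : ℝ) ≤ N := by exact_mod_cast hN
    linarith
  have step1 : ∑ I : Fin n → Fin N, ∑ J : Fin n → Fin N, ∑ K : Fin n → Fin N,
      (if NV I J K then w I else 0) ≤
      ∑ I : Fin n → Fin N, ∑ p : (Fin n → Fin N) × (Fin n → Fin N), ∑ β : Fin n → Bool,
        (if DD I (swEquiv β p).1 (swEquiv β p).2 then w I else 0) := by
    refine Finset.sum_le_sum fun I _ => ?_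
    rw [Fintype.sum_prod_type]
    refine Finset.sum_le_sum fun J _ => Finset.sum_le_sum fun K _ => ?_
    have hnn : ∀ β ∈ (Finset.univ : Finset (Fin n → Bool)),
        0 ≤ (if DD I (swEquiv β (J, K)).1 (swEquiv β (J, K)).2 then w I else 0) := by
      intro β _
      split_ifs
      · exact hw I
      · exact le_rfl
    split_ifs with h
    · obtain ⟨β, hβ⟩ := h.exists_DD
      refine le_trans (le_of_eq ?_) (Finset.single_le_sum hnn (Finset.mem_univ β))
      exact (if_pos hβ).symm
    · exact Finset.sum_nonneg hnn
  have step2 : ∑ I : Fin n → Fin N, ∑ p : (Fin n → Fin N) × (Fin n → Fin N), ∑ β : Fin n → Bool,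
        (if DD I (swEquiv β p).1 (swEquiv β p).2 then w I else 0) =
      2 ^ n * ∑ I : Fin n → Fin N, ∑ B : Fin n → Fin N, ∑ F : Fin n → Fin N,
        (if DD I F B then w I else 0) := by
    rw [Finset.mul_sum]
    refine Finset.sum_congr rfl fun I _ => ?_
    rw [Finset.sum_comm]
    have : ∀ β : Fin n → Bool, ∑ p : (Fin n → Fin N) × (Fin n → Fin N),
        (if DD I (swEquiv β p).1 (swEquiv β p).2 then w I else 0) =
        ∑ B : Fin n → Fin N, ∑ F : Fin n → Fin N, (if DD I F B then w I else 0) := by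
      intro β
      rw [Equiv.sum_comp (swEquiv β) (fun p => if DD I p.1 p.2 then w I else 0),
        Fintype.sum_prod_type, Finset.sum_comm]
    simp only [this, Finset.sum_const, Finset.card_univ, Fintype.card_fun, Fintype.card_bool,
      Fintype.card_fin, nsmul_eq_mul]
    push_cast
    rfl
  have step3 : ∑ I : Fin n → Fin N, ∑ B : Fin n → Fin N, ∑ F : Fin n → Fin N,
        (if DD I F B then w I else 0) ≤
      (N : ℝ) ^ n * ∑ I : Fin n → Fin N, ∑ B : Fin n → Fin N, ∏ a, gw u (cnt I a) (cnt B a) := by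
    simp only [Finset.mul_sum]
    exact Finset.sum_le_sum fun I _ => Finset.sum_le_sum fun B _ => sum_DD hN0 I B
  set s := Real.sqrt u with hs
  have hs0 : 0 < s := Real.sqrt_pos.2 hu0
  have hss : s ^ 2 = u := Real.sq_sqrt hu0.le
  have hs71 : s ≤ 0.71 := by nlinarith
  have hex : Real.exp 1 * (s / 6) < 1 := by
    have := Real.exp_one_lt_d9
    nlinarith
  have step4 := words_bound (n := n) (N := N) (gw u)
    (fun k l => by unfold gw; split_ifs <;> positivity) (x := s / 6) (z := 2 / 3 * s)
    (by positivity) (by positivity)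
  have step5 := (site_sum n hn u (s / 6) (2 / 3 * s) (by positivity) (by positivity) hex)
  have hH := H_bound s hs0 (by rw [hss]; exact hu2)
  rw [hss] at hH
  have step6 := step5.trans hH
  have hnn : 0 ≤ ∑ k ∈ Finset.range (n + 1), ∑ l ∈ Finset.range (n + 1),
          gw u k l * ((s / 6) ^ k / k.factorial) * ((2 / 3 * s) ^ l / l.factorial) :=
    Finset.sum_nonneg fun k _ => Finset.sum_nonneg fun l _ => by
      have : 0 ≤ gw u k l := by unfold gw; split_ifs <;> positivity
      positivity
  have step7 := pow_le_pow_left₀ hnn step6 N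
  have hexpN : Real.exp u ^ N = Real.exp 1 ^ n := by
    rw [← Real.exp_nat_mul, ← Real.exp_nat_mul, hu]
    congr 1
    field_simp
  rw [hexpN] at step7
  have hxz : ((s / 6) ^ n * (2 / 3 * s) ^ n)⁻¹ = 9 ^ n * (N : ℝ) ^ n / (n : ℝ) ^ n := by
    rw [← mul_pow]
    have : s / 6 * (2 / 3 * s) = u / 9 := by rw [← hss]; ring
    rw [this, hu, ← inv_pow, ← mul_pow, ← div_pow]
    congr 1
    field_simp
  rw [hxz] at step4
  refine step1.trans (step2.le.trans ?_)
  calc _ ≤ 2 ^ n * ((N : ℝ) ^ n * ((n.factorial : ℝ) ^ 2 * (9 ^ n * (N : ℝ) ^ n / (n : ℝ) ^ n) * Real.exp 1 ^ n)) := by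
        refine mul_le_mul_of_nonneg_left (step3.trans ?_) (by positivity)
        refine mul_le_mul_of_nonneg_left (step4.trans ?_) (by positivity)
        exact mul_le_mul_of_nonneg_left step7 (by positivity)
    _ = _ := by
        rw [show (18 : ℝ) = 2 * 9 by norm_num, mul_pow, div_pow, two_mul n, pow_add]
        ring


lemma analytic_inner {α : Type*} [TopologicalSpace α] [T2Space α] [MeasurableSpace α] [BorelSpace α]
    (μ : Measure α) [μ.OuterRegular] (f : (ℕ → ℕ) → α) (hf : Continuous f) (c : ENNReal)
    (hc : c < μ (Set.range f)) : ∃ K, IsCompact K ∧ K ⊆ Set.range f ∧ c ≤ μ K := by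
  have step : ∀ (n : ℕ) (B : {B : Set (ℕ → ℕ) // c < μ (f '' B)}), ∃ k : ℕ,
      c < μ (f '' (B.1 ∩ {x | x n ≤ k})) := by
    rintro n ⟨B, hB⟩
    have hU : f '' B = ⋃ k : ℕ, f '' (B ∩ {x | x n ≤ k}) := by
      ext y
      simp only [Set.mem_image, Set.mem_iUnion, Set.mem_inter_iff, Set.mem_ofPred_eq]
      constructor
      · rintro ⟨x, hx, rfl⟩; exact ⟨x n, x, ⟨hx, le_rfl⟩, rfl⟩
      · rintro ⟨k, x, ⟨hx, -⟩, rfl⟩; exact ⟨x, hx, rfl⟩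
    have hmono : Monotone (fun k : ℕ => f '' (B ∩ {x | x n ≤ k})) := by
      intro k k' hk
      apply Set.image_mono
      rintro x ⟨h1, h2⟩
      exact ⟨h1, le_trans h2 hk⟩
    rw [hU, hmono.measure_iUnion] at hB
    exact lt_iSup_iff.1 hB
  choose kk hkk using step
  let B : ℕ → {B : Set (ℕ → ℕ) // c < μ (f '' B)} := fun n =>
    Nat.rec ⟨Set.univ, by rwa [Set.image_univ]⟩ (fun n B => ⟨_, hkk n B⟩) n
  let k : ℕ → ℕ := fun n => kk n (B n)
  have hBs : ∀ n, (B (n + 1)).1 = (B n).1 ∩ {x | x n ≤ k n} := fun n => rfl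
  have hB : ∀ n, (B n).1 = {x | ∀ i < n, x i ≤ k i} := by
    intro n
    induction n with
    | zero => ext x; simp [B]
    | succ n ih =>
      rw [hBs, ih]
      ext x
      simp only [Set.mem_inter_iff, Set.mem_ofPred_eq, Nat.lt_succ_iff_lt_or_eq]
      constructor
      · rintro ⟨h1, h2⟩ i (hi | rfl)
        · exact h1 i hi
        · exact h2
      · intro h; exact ⟨fun i hi => h i (Or.inl hi), h n (Or.inr rfl)⟩
  have hK : IsCompact (Set.pi Set.univ (fun i => Set.Iic (k i))) :=
    isCompact_univ_pi fun i => (Set.finite_Iic (k i)).isCompact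
  refine ⟨f '' (Set.pi Set.univ (fun i => Set.Iic (k i))), hK.image hf, Set.image_subset_range _ _, ?_⟩
  by_contra hlt
  push Not at hlt
  obtain ⟨U, hKU, hUo, hUc⟩ := Set.exists_isOpen_lt_of_lt _ _ hlt
  have hn : ∀ n, ∃ x, x ∈ (B n).1 ∧ f x ∉ U := by
    intro n
    by_contra h
    push Not at h
    have : f '' (B n).1 ⊆ U := by rintro _ ⟨x, hx, rfl⟩; exact h x hx
    exact absurd ((B n).2.trans_le (measure_mono this)) hUc.not_gt
  choose x hxB hxU using hn
  have hy : ∀ n, (fun i => min (x n i) (k i)) ∈ Set.pi Set.univ (fun i => Set.Iic (k i)) :=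
    fun n i _ => Set.mem_Iic.2 (min_le_right _ _)
  obtain ⟨y, hyK, ψ, hψ, hlim⟩ := hK.tendsto_subseq hy
  have hlim2 : Filter.Tendsto (fun j => x (ψ j)) Filter.atTop (nhds y) := by
    rw [tendsto_pi_nhds] at hlim ⊢
    intro i
    refine (hlim i).congr' ?_
    filter_upwards [hψ.tendsto_atTop.eventually_gt_atTop i] with j hj
    have := hxB (ψ j)
    rw [hB] at this
    simp only [Function.comp]
    exact min_eq_left (this i hj)
  have hyU : f y ∈ U := hKU ⟨y, hyK, rfl⟩
  have := ((hf.tendsto y).comp hlim2).eventually (hUo.mem_nhds hyU)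
  obtain ⟨j, hj⟩ := this.exists
  exact hxU _ hj

lemma analytic_null {α : Type*} [TopologicalSpace α] [T2Space α] [MeasurableSpace α] [BorelSpace α]
    (μ : Measure α) [μ.OuterRegular] [IsFiniteMeasure μ] {A : Set α} (hA : AnalyticSet A) :
    NullMeasurableSet A μ := by
  rw [AnalyticSet] at hA
  rcases hA with rfl | ⟨f, hf, rfl⟩
  · exact MeasurableSet.empty.nullMeasurableSet
  rcases eq_or_ne (μ (Set.range f)) 0 with h0 | h0
  · exact NullMeasurableSet.of_null h0
  obtain ⟨c, -, hc, hlim⟩ := exists_seq_strictMono_tendsto' (pos_iff_ne_zero.2 h0)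
  choose K hK hKs hKc using fun n => analytic_inner μ f hf (c n) (hc n).2
  have hL : MeasurableSet (⋃ n, K n) := MeasurableSet.iUnion fun n => (hK n).measurableSet
  have hLs : (⋃ n, K n) ⊆ Set.range f := Set.iUnion_subset hKs
  have hm : μ (Set.range f) ≤ μ (⋃ n, K n) :=
    le_of_tendsto' hlim fun n => (hKc n).trans (measure_mono (Set.subset_iUnion K n))
  have := ae_eq_of_subset_of_measure_ge hLs hm hL.nullMeasurableSet (measure_ne_top _ _)
  exact hL.nullMeasurableSet.congr this

lemma sup_aemeasurable {X : Type*} [TopologicalSpace X] [PolishSpace X] [MeasurableSpace X] [BorelSpace X]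
    (μ : Measure X) [IsFiniteMeasure μ] (φ : X → X → X → ℝ)
    (hφ : Measurable fun p : X × X × X => φ p.1 p.2.1 p.2.2) (C : ℝ) (hC : ∀ x z z', |φ x z z'| ≤ C) :
    AEMeasurable (fun x => ⨆ z, ⨆ z', |φ x z z'|) μ := by
  let := TopologicalSpace.upgradeIsCompletelyMetrizable X
  apply NullMeasurable.aemeasurable
  suffices h : ∀ a : ℝ, NullMeasurableSet ((fun x : X => ⨆ z, ⨆ z', |φ x z z'|) ⁻¹' Set.Ioi a) μ from
    measurable_of_Ioi (α := ℝ) (δ := NullMeasurableSpace X μ) h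
  intro a
  by_cases hX : Nonempty X
  swap
  · have : IsEmpty X := not_nonempty_iff.1 hX
    rw [Set.eq_empty_of_isEmpty ((fun x => ⨆ z, ⨆ z', |φ x z z'|) ⁻¹' Set.Ioi a)]
    exact MeasurableSet.empty.nullMeasurableSet
  have hb1 : ∀ x z, BddAbove (Set.range fun z' => |φ x z z'|) := fun x z =>
    ⟨C, by rintro _ ⟨z', rfl⟩; exact hC x z z'⟩
  have hb2 : ∀ x, BddAbove (Set.range fun z => ⨆ z', |φ x z z'|) := fun x =>
    ⟨C, by rintro _ ⟨z, rfl⟩; exact ciSup_le fun z' => hC x z z'⟩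
  have : ((fun x => ⨆ z, ⨆ z', |φ x z z'|) ⁻¹' Set.Ioi a) =
      Prod.fst '' {p : X × X × X | a < |φ p.1 p.2.1 p.2.2|} := by
    ext x
    simp only [Set.mem_preimage, Set.mem_Ioi, Set.mem_image, Set.mem_ofPred_eq]
    constructor
    · intro h
      obtain ⟨z, hz⟩ := exists_lt_of_lt_ciSup h
      obtain ⟨z', hz'⟩ := exists_lt_of_lt_ciSup hz
      exact ⟨(x, z, z'), hz', rfl⟩
    · rintro ⟨⟨x', z, z'⟩, h, rfl⟩
      exact h.trans_le ((le_ciSup (hb1 x' z) z').trans (le_ciSup (hb2 x') z))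
  rw [this]
  apply analytic_null
  apply MeasurableSet.analyticSet_image _ measurable_fst
  exact measurableSet_lt measurable_const hφ.abs


section AbstractPart

variable {X : Type*} [MeasurableSpace X]

lemma pi_density {ι : Type*} [Fintype ι] (lam : Measure X) [SigmaFinite lam] (ρ : X → ℝ)
    (hρ : Measurable ρ) (hρ0 : ∀ x, 0 ≤ ρ x) (hinteg : Integrable ρ lam) :
    Measure.pi (fun _ : ι => lam.withDensity (fun x => ENNReal.ofReal (ρ x))) =
      (Measure.pi (fun _ : ι => lam)).withDensity (fun Y => ENNReal.ofReal (∏ i, ρ (Y i))) := by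
  classical
  have hfin : IsFiniteMeasure (lam.withDensity (fun x => ENNReal.ofReal (ρ x))) :=
    isFiniteMeasure_withDensity_ofReal hinteg.2
  refine Measure.pi_eq fun s hs => ?_
  have hbox : MeasurableSet (Set.pi Set.univ s) := MeasurableSet.univ_pi hs
  rw [withDensity_apply _ hbox, ← lintegral_indicator hbox]
  have e1 : ∀ Y : ι → X, (Set.pi Set.univ s).indicator (fun Y => ENNReal.ofReal (∏ i, ρ (Y i))) Y =
      ENNReal.ofReal (∏ i, (s i).indicator ρ (Y i)) := by
    intro Y
    by_cases hY : Y ∈ Set.pi Set.univ s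
    · rw [Set.indicator_of_mem hY]
      congr 1
      refine Finset.prod_congr rfl fun i _ => ?_
      rw [Set.indicator_of_mem (hY i (Set.mem_univ i))]
    · rw [Set.indicator_of_notMem hY]
      simp only [Set.mem_pi, Set.mem_univ, true_implies, not_forall] at hY
      obtain ⟨i, hi⟩ := hY
      rw [Finset.prod_eq_zero (Finset.mem_univ i) (Set.indicator_of_notMem hi ρ)]
      simp
  simp only [e1]
  have hI : ∀ i, Integrable ((s i).indicator ρ) lam := fun i => hinteg.indicator (hs i)
  rw [← ofReal_integral_eq_lintegral_ofReal (Integrable.fintype_prod hI)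
    (Filter.Eventually.of_forall fun Y => Finset.prod_nonneg fun i _ =>
      Set.indicator_nonneg (fun x _ => hρ0 x) _)]
  rw [integral_fintype_prod_eq_prod (μ := fun _ : ι => lam) (fun i => (s i).indicator ρ),
    ENNReal.ofReal_prod_of_nonneg
      (fun i _ => integral_nonneg fun x => Set.indicator_nonneg (fun x _ => hρ0 x) _)]
  refine Finset.prod_congr rfl fun i _ => ?_
  rw [ofReal_integral_eq_lintegral_ofReal (hI i)
    (Filter.Eventually.of_forall fun x => Set.indicator_nonneg (fun x _ => hρ0 x) _),
    withDensity_apply _ (hs i), ← lintegral_indicator (hs i)]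
  congr 1
  funext x
  by_cases hx : x ∈ s i <;> simp [hx]

variable {N : ℕ} (μ : Measure X) [IsProbabilityMeasure μ]

lemma map_update (a : Fin N) :
    MeasurePreserving (fun p : (Fin N → X) × X => Function.update p.1 a p.2)
      ((Measure.pi (fun _ : Fin N => μ)).prod μ) (Measure.pi (fun _ : Fin N => μ)) := by
  classical
  have hmeas : Measurable (fun p : (Fin N → X) × X => Function.update p.1 a p.2) := by
    rw [measurable_pi_iff]
    intro i
    by_cases h : i = a
    · subst h; simpa using measurable_snd
    · simp only [Function.update_of_ne h]
      exact (measurable_pi_apply i).comp measurable_fst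
  refine ⟨hmeas, ?_⟩
  symm
  refine Measure.pi_eq fun s hs => ?_
  rw [Measure.map_apply hmeas (MeasurableSet.univ_pi hs)]
  have : (fun p : (Fin N → X) × X => Function.update p.1 a p.2) ⁻¹' (Set.pi Set.univ s) =
      (Set.pi Set.univ (Function.update s a Set.univ)) ×ˢ (s a) := by
    ext ⟨Y, x⟩
    simp only [Set.mem_preimage, Set.mem_pi, Set.mem_univ, true_implies, Set.mem_prod]
    constructor
    · intro h
      refine ⟨fun i => ?_, by simpa using h a⟩
      by_cases hi : i = a
      · subst hi; simp
      · have := h i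
        simpa [Function.update_of_ne hi] using this
    · rintro ⟨h1, h2⟩ i
      by_cases hi : i = a
      · subst hi; simpa using h2
      · have := h1 i
        simpa [Function.update_of_ne hi] using this
  rw [this, Measure.prod_prod, Measure.pi_pi]
  rw [← Finset.mul_prod_erase _ _ (Finset.mem_univ a),
    ← Finset.mul_prod_erase Finset.univ (fun i => μ (s i)) (Finset.mem_univ a)]
  simp only [Function.update_self, measure_univ, one_mul]
  rw [mul_comm]
  congr 1
  refine Finset.prod_congr rfl fun i hi => ?_
  rw [Function.update_of_ne (Finset.ne_of_mem_erase hi)]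

lemma integrable_update (a : Fin N) (f : (Fin N → X) → ℝ)
    (hf : Integrable f (Measure.pi (fun _ : Fin N => μ))) :
    Integrable (fun p : (Fin N → X) × X => f (Function.update p.1 a p.2))
      ((Measure.pi (fun _ : Fin N => μ)).prod μ) :=
  (map_update μ a).integrable_comp_of_integrable hf

lemma integral_update (a : Fin N) (f : (Fin N → X) → ℝ)
    (hf : Integrable f (Measure.pi (fun _ : Fin N => μ))) :
    ∫ Y, f Y ∂(Measure.pi (fun _ : Fin N => μ)) =
      ∫ Y, ∫ x, f (Function.update Y a x) ∂μ ∂(Measure.pi (fun _ : Fin N => μ)) := by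
  have h := map_update μ a
  have hi := integrable_update μ a f hf
  rw [← integral_prod _ hi]
  conv_lhs => rw [← h.map_eq]
  rw [integral_map h.measurable.aemeasurable]
  rw [h.map_eq]
  exact hf.1

lemma integral_update_two (j k : Fin N) (f : (Fin N → X) → ℝ)
    (hf : Integrable f (Measure.pi (fun _ : Fin N => μ)))
    (h0 : ∀ Y : Fin N → X, ∫ z, ∫ z', f (Function.update (Function.update Y j z) k z') ∂μ ∂μ = 0) :
    ∫ Y, f Y ∂(Measure.pi (fun _ : Fin N => μ)) = 0 := by
  rw [integral_update μ k f hf]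
  rw [integral_update μ j (fun Y => ∫ x, f (Function.update Y k x) ∂μ)
    (integrable_update μ k f hf).integral_prod_left]
  simp [h0]

lemma term_integrable (φ : X → X → X → ℝ) (hφ : Measurable fun p : X × X × X => φ p.1 p.2.1 p.2.2) (C : ℝ) (hC : ∀ x z z', |φ x z z'| ≤ C)
    {n : ℕ} (I J K : Fin n → Fin N) :
    Integrable (fun Y : Fin N → X => ∏ l, φ (Y (I l)) (Y (J l)) (Y (K l)))
      (Measure.pi (fun _ : Fin N => μ)) := by
  have hm : Measurable (fun Y : Fin N → X => ∏ l, φ (Y (I l)) (Y (J l)) (Y (K l))) := by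
    refine Finset.measurable_fun_prod _ fun l _ => ?_
    have h3 : Measurable (fun Y : Fin N → X => (Y (I l), Y (J l), Y (K l))) :=
      (measurable_pi_apply (I l)).prodMk
        ((measurable_pi_apply (J l)).prodMk (measurable_pi_apply (K l)))
    exact hφ.comp h3
  refine Integrable.of_bound hm.aestronglyMeasurable (C ^ n) (Filter.Eventually.of_forall fun Y => ?_)
  rw [Real.norm_eq_abs, Finset.abs_prod]
  calc _ ≤ ∏ l : Fin n, C := Finset.prod_le_prod (fun _ _ => abs_nonneg _) fun l _ => hC _ _ _
    _ = _ := by simp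

lemma vanish (φ : X → X → X → ℝ) (hφ : Measurable fun p : X × X × X => φ p.1 p.2.1 p.2.2) (C : ℝ) (hC : ∀ x z z', |φ x z z'| ≤ C)
    (h1 : ∀ z z', ∫ x, φ x z z' ∂μ = 0) (h2 : ∀ x, ∫ z, ∫ z', φ x z z' ∂μ ∂μ = 0)
    {n : ℕ} (I J K : Fin n → Fin N) (hNV : ¬ NV I J K) :
    ∫ Y : Fin N → X, ∏ l, φ (Y (I l)) (Y (J l)) (Y (K l)) ∂(Measure.pi (fun _ : Fin N => μ)) = 0 := by
  classical
  have hinteg := term_integrable (N := N) μ φ hφ C hC I J K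
  have hge2 : ∀ (f : Fin n → Fin N) (l l' : Fin n), l ≠ l' → f l = f l' → 2 ≤ cnt f (f l) := by
    intro f l l' hne he
    rw [cnt, Fintype.card_subtype]
    have : ({l, l'} : Finset (Fin n)) ⊆ Finset.univ.filter (fun x => f x = f l) := by
      intro x hx
      simp only [Finset.mem_insert, Finset.mem_singleton] at hx
      rcases hx with rfl | rfl <;> simp [he]
    have := Finset.card_le_card this
    rwa [Finset.card_pair hne] at this
  have hge1 : ∀ (f : Fin n → Fin N) (l : Fin n), 1 ≤ cnt f (f l) := by
    intro f l
    rw [cnt, Fintype.card_subtype]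
    exact Finset.card_pos.2 ⟨l, by simp⟩
  rw [NV, not_and_or] at hNV
  rcases hNV with h | h
  · push Not at h
    obtain ⟨a, ha, hJ, hK⟩ := h
    obtain ⟨l, hl⟩ := exists_of_cnt (f := I) (a := a) (by omega)
    have hIne : ∀ l' ≠ l, I l' ≠ a := by
      intro l' hne he
      have := hge2 I l l' hne.symm (hl.trans he.symm)
      rw [hl] at this; omega
    have hJne : ∀ l', J l' ≠ a := by
      intro l' he; have := hge1 J l'; rw [he] at this; omega
    have hKne : ∀ l', K l' ≠ a := by
      intro l' he; have := hge1 K l'; rw [he] at this; omega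
    rw [integral_update μ a _ hinteg]
    have : ∀ (Y : Fin N → X), ∫ x, ∏ l, φ (Function.update Y a x (I l)) (Function.update Y a x (J l))
        (Function.update Y a x (K l)) ∂μ = 0 := by
      intro Y
      have e : ∀ x, ∏ l, φ (Function.update Y a x (I l)) (Function.update Y a x (J l))
        (Function.update Y a x (K l)) = φ x (Y (J l)) (Y (K l)) *
          ∏ l ∈ Finset.univ.erase l, φ (Y (I l)) (Y (J l)) (Y (K l)) := by
        intro x
        rw [← Finset.mul_prod_erase _ _ (Finset.mem_univ l)]
        rw [hl, Function.update_self, Function.update_of_ne (hJne l), Function.update_of_ne (hKne l)]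
        congr 1
        refine Finset.prod_congr rfl fun l' hl' => ?_
        rw [Function.update_of_ne (hJne l'), Function.update_of_ne (hKne l'),
          Function.update_of_ne (hIne l' (Finset.ne_of_mem_erase hl'))]
      simp only [e]
      rw [integral_mul_const, h1, zero_mul]
    simp [this]
  · push Not at h
    obtain ⟨l, ⟨hIj, hj⟩, hIk, hk⟩ := h
    have hj1 := hge1 J l
    have hk1 := hge1 K l
    have hKj : cnt K (J l) = 0 := by omega
    have hJk : cnt J (K l) = 0 := by omega
    have hJj : cnt J (J l) = 1 := by omega
    have hKk : cnt K (K l) = 1 := by omega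
    have hjk : J l ≠ K l := by
      intro he; rw [← he] at hk1; omega
    have hI1 : ∀ l', I l' ≠ J l := by
      intro l' he; have := hge1 I l'; rw [he] at this; omega
    have hI2 : ∀ l', I l' ≠ K l := by
      intro l' he; have := hge1 I l'; rw [he] at this; omega
    have hJ1 : ∀ l' ≠ l, J l' ≠ J l := by
      intro l' hne he; have := hge2 J l l' hne.symm he.symm; omega
    have hJ2 : ∀ l', J l' ≠ K l := by
      intro l' he; have := hge1 J l'; rw [he] at this; omega
    have hK1 : ∀ l', K l' ≠ J l := by
      intro l' he; have := hge1 K l'; rw [he] at this; omega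
    have hK2 : ∀ l' ≠ l, K l' ≠ K l := by
      intro l' hne he; have := hge2 K l l' hne.symm he.symm; omega
    refine integral_update_two μ (J l) (K l) _ hinteg fun Y => ?_
    have e : ∀ z z', ∏ l', φ (Function.update (Function.update Y (J l) z) (K l) z' (I l'))
        (Function.update (Function.update Y (J l) z) (K l) z' (J l'))
        (Function.update (Function.update Y (J l) z) (K l) z' (K l')) = φ (Y (I l)) z z' *
          ∏ l ∈ Finset.univ.erase l, φ (Y (I l)) (Y (J l)) (Y (K l)) := by
      intro z z'
      rw [← Finset.mul_prod_erase _ _ (Finset.mem_univ l)]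
      rw [Function.update_self, Function.update_of_ne (hI2 l), Function.update_of_ne (hI1 l),
        Function.update_of_ne (hJ2 l), Function.update_self]
      congr 1
      refine Finset.prod_congr rfl fun l' hl' => ?_
      have hne := Finset.ne_of_mem_erase hl'
      rw [Function.update_of_ne (hI2 l'), Function.update_of_ne (hI1 l'),
        Function.update_of_ne (hJ2 l'), Function.update_of_ne (hJ1 l' hne),
        Function.update_of_ne (hK2 l' hne), Function.update_of_ne (hK1 l')]
    simp only [e]
    simp only [integral_mul_const, h2, zero_mul]

lemma term_bound (φ : X → X → X → ℝ) (hφ : Measurable fun p : X × X × X => φ p.1 p.2.1 p.2.2) (C : ℝ) (hC : ∀ x z z', |φ x z z'| ≤ C)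
    (F : X → ℝ) (hF : AEMeasurable F μ) (hF0 : ∀ x, 0 ≤ F x) (hFC : ∀ x, F x ≤ C)
    (hφF : ∀ x z z', |φ x z z'| ≤ F x) (S : ℝ) (hS : ∀ k : ℕ, 1 ≤ k → ∫ x, F x ^ k ∂μ ≤ (S * k) ^ k)
    {n : ℕ} (I J K : Fin n → Fin N) :
    ∫ Y : Fin N → X, ∏ l, φ (Y (I l)) (Y (J l)) (Y (K l)) ∂(Measure.pi (fun _ : Fin N => μ)) ≤
      S ^ n * ∏ a, (cnt I a : ℝ) ^ cnt I a := by
  classical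
  have hprod : ∀ h : Fin N → ℝ, ∏ l, h (I l) = ∏ a, h a ^ cnt I a := by
    intro h
    rw [← Finset.prod_fiberwise (s := Finset.univ) (g := I)]
    refine Finset.prod_congr rfl fun a _ => ?_
    rw [Finset.prod_congr rfl (g := fun _ => h a)]
    · rw [Finset.prod_const, cnt, Fintype.card_subtype]
    · intro l hl
      rw [(Finset.mem_filter.1 hl).2]
  have hFi : ∀ k : ℕ, Integrable (fun x => F x ^ k) μ := by
    intro k
    refine Integrable.of_bound (hF.pow_const k).aestronglyMeasurable (C ^ k)
      (Filter.Eventually.of_forall fun x => ?_)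
    rw [Real.norm_eq_abs, abs_of_nonneg (pow_nonneg (hF0 x) k)]
    exact pow_le_pow_left₀ (hF0 x) (hFC x) k
  calc ∫ Y : Fin N → X, ∏ l, φ (Y (I l)) (Y (J l)) (Y (K l)) ∂(Measure.pi (fun _ : Fin N => μ))
      ≤ ∫ Y : Fin N → X, ∏ a, F (Y a) ^ cnt I a ∂(Measure.pi (fun _ : Fin N => μ)) := by
        refine integral_mono (term_integrable μ φ hφ C hC I J K)
          (Integrable.fintype_prod (f := fun a x => F x ^ cnt I a) fun a => hFi _) fun Y => ?_
        change _ ≤ ∏ a, F (Y a) ^ cnt I a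
        rw [← hprod (fun a => F (Y a))]
        refine (le_abs_self _).trans ?_
        rw [Finset.abs_prod]
        exact Finset.prod_le_prod (fun _ _ => abs_nonneg _) fun l _ => hφF _ _ _
    _ = ∏ a, ∫ x, F x ^ cnt I a ∂μ :=
        integral_fintype_prod_eq_prod (μ := fun _ : Fin N => μ) (fun a x => F x ^ cnt I a)
    _ ≤ ∏ a, (S * cnt I a) ^ cnt I a := by
        refine Finset.prod_le_prod (fun a _ => integral_nonneg fun x => pow_nonneg (hF0 x) _) fun a _ => ?_
        rcases Nat.eq_zero_or_pos (cnt I a) with h | h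
        · rw [h]; simp
        · exact hS _ h
    _ = _ := by
        simp only [mul_pow, Finset.prod_mul_distrib]
        rw [← hprod (fun _ => S)]
        simp

lemma abstract_bound (φ : X → X → X → ℝ) (hφ : Measurable fun p : X × X × X => φ p.1 p.2.1 p.2.2) (C : ℝ) (hC : ∀ x z z', |φ x z z'| ≤ C)
    (h1 : ∀ z z', ∫ x, φ x z z' ∂μ = 0) (h2 : ∀ x, ∫ z, ∫ z', φ x z z' ∂μ ∂μ = 0)
    (F : X → ℝ) (hF : AEMeasurable F μ) (hF0 : ∀ x, 0 ≤ F x) (hFC : ∀ x, F x ≤ C)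
    (hφF : ∀ x z z', |φ x z z'| ≤ F x) (S : ℝ) (hS0 : 0 ≤ S)
    (hS : ∀ k : ℕ, 1 ≤ k → ∫ x, F x ^ k ∂μ ≤ (S * k) ^ k)
    (m : ℕ) (hm : 1 ≤ m) (hN : 4 * m ≤ N) :
    ((Nat.factorial (2 * m) : ℝ))⁻¹ *
      ∫ Y : Fin N → X, ((1 / (N : ℝ) ^ 2) * ∑ i : Fin N, ∑ j : Fin N, ∑ k : Fin N,
              φ (Y i) (Y j) (Y k)) ^ (2 * m) ∂(Measure.pi (fun _ : Fin N => μ)) ≤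
      2 * (m : ℝ) ^ 2 * (Real.sqrt (32 * Real.exp 1 ^ 3) * S) ^ (2 * m) := by
  classical
  have hNr : (0 : ℝ) < N := by have : 0 < N := by omega
                               exact_mod_cast this
  set n := 2 * m with hn
  have hexp : ∀ Y : Fin N → X, (∑ i : Fin N, ∑ j : Fin N, ∑ k : Fin N, φ (Y i) (Y j) (Y k)) ^ n =
      ∑ I : Fin n → Fin N, ∑ J : Fin n → Fin N, ∑ K : Fin n → Fin N,
        ∏ l, φ (Y (I l)) (Y (J l)) (Y (K l)) := by
    intro Y
    have e0 : ∀ (f : Fin n → Fin N → ℝ), ∏ l, ∑ i, f l i = ∑ I : Fin n → Fin N, ∏ l, f l (I l) := by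
      intro f
      rw [Finset.prod_univ_sum, Fintype.piFinset_univ]
    calc _ = ∏ l : Fin n, ∑ i : Fin N, ∑ j : Fin N, ∑ k : Fin N, φ (Y i) (Y j) (Y k) := by simp
      _ = _ := by simp only [e0]
  have hinteg : ∫ Y : Fin N → X, ((1 / (N : ℝ) ^ 2) * ∑ i : Fin N, ∑ j : Fin N, ∑ k : Fin N,
              φ (Y i) (Y j) (Y k)) ^ n ∂(Measure.pi (fun _ : Fin N => μ)) =
      ((N : ℝ) ^ (2 * n))⁻¹ * ∑ I : Fin n → Fin N, ∑ J : Fin n → Fin N, ∑ K : Fin n → Fin N,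
        ∫ Y : Fin N → X, ∏ l, φ (Y (I l)) (Y (J l)) (Y (K l)) ∂(Measure.pi (fun _ : Fin N => μ)) := by
    simp only [mul_pow, hexp]
    rw [integral_const_mul, one_div, inv_pow, ← pow_mul]
    congr 1
    have ti := fun I J K => term_integrable (N := N) (n := n) μ φ hφ C hC I J K
    rw [integral_finsetSum _ fun I _ => integrable_finsetSum _ fun J _ =>
      integrable_finsetSum _ fun K _ => ti I J K]
    refine Finset.sum_congr rfl fun I _ => ?_
    rw [integral_finsetSum _ fun J _ => integrable_finsetSum _ fun K _ => ti I J K]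
    refine Finset.sum_congr rfl fun J _ => ?_
    rw [integral_finsetSum _ fun K _ => ti I J K]
  have hsum : ∑ I : Fin n → Fin N, ∑ J : Fin n → Fin N, ∑ K : Fin n → Fin N,
        ∫ Y : Fin N → X, ∏ l, φ (Y (I l)) (Y (J l)) (Y (K l)) ∂(Measure.pi (fun _ : Fin N => μ)) ≤
      S ^ n * ((N : ℝ) ^ (2 * n) * ((n.factorial : ℝ) * (18 ^ n * ((n.factorial : ℝ) * (Real.exp 1 / n) ^ n)))) := by
    refine le_trans ?_ (mul_le_mul_of_nonneg_left
      (total_count (n := n) (N := N) (by omega) (by omega)) (by positivity))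
    simp only [Finset.mul_sum]
    refine Finset.sum_le_sum fun I _ => Finset.sum_le_sum fun J _ => Finset.sum_le_sum fun K _ => ?_
    split_ifs with h
    · exact term_bound μ φ hφ C hC F hF hF0 hFC hφF S hS I J K
    · rw [vanish μ φ hφ C hC h1 h2 I J K h, mul_zero]
  rw [hinteg]
  have hfac : (0 : ℝ) < n.factorial := by exact_mod_cast Nat.factorial_pos _
  have hNp : (0 : ℝ) < (N : ℝ) ^ (2 * n) := by positivity
  calc _ ≤ (n.factorial : ℝ)⁻¹ * (((N : ℝ) ^ (2 * n))⁻¹ * (S ^ n * ((N : ℝ) ^ (2 * n) * ((n.factorial : ℝ) *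
        (18 ^ n * ((n.factorial : ℝ) * (Real.exp 1 / n) ^ n)))))) := by gcongr
    _ = S ^ n * (18 ^ n * ((n.factorial : ℝ) * (Real.exp 1 / n) ^ n)) := by field_simp
    _ ≤ S ^ n * (2 * (m : ℝ) ^ 2 * Real.sqrt (32 * Real.exp 1 ^ 3) ^ n) :=
        mul_le_mul_of_nonneg_left (final_num m hm) (by positivity)
    _ = _ := by rw [mul_pow]; ring

end AbstractPart

/-- Proposition 3.2 (small-`m` regime): if `4 ≤ 4m ≤ N` and `φ` satisfies both
cancellations, then
`(1/(2m)!) ∫ ρ̄^{⊗N} (N^{−2} ∑_{i,j,k} φ(x_i,x_j,x_k))^{2m}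
  ≤ 2 m² (√(32e³) sup_{p≥1} M_p/p)^{2m}`. -/
theorem stmt16 {d N m : ℕ} (hd : 0 < d) (hm : 1 ≤ m) (h4m : 4 * m ≤ N)
    (ρ : Torus d → ℝ) (hρmeas : Measurable ρ) (hρ0 : ∀ x, 0 ≤ ρ x)
    (hρ1 : ∫ x : Torus d, ρ x = 1)
    (φ : Torus d → Torus d → Torus d → ℝ)
    (hφmeas : Measurable fun p : Torus d × Torus d × Torus d => φ p.1 p.2.1 p.2.2)
    (C : ℝ) (hφbdd : ∀ x z z', |φ x z z'| ≤ C)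
    (hcancel1 : ∀ z z', ∫ x : Torus d, φ x z z' * ρ x = 0)
    (hcancel2 : ∀ x, ∫ z : Torus d, ∫ z' : Torus d, φ x z z' * (ρ z * ρ z') = 0) :
    ((Nat.factorial (2 * m) : ℝ))⁻¹ *
        ∫ X : Fin N → Torus d,
          ((1 / (N : ℝ) ^ 2) * ∑ i : Fin N, ∑ j : Fin N, ∑ k : Fin N,
              φ (X i) (X j) (X k)) ^ (2 * m) * ∏ s, ρ (X s)
      ≤ 2 * (m : ℝ) ^ 2 * (Real.sqrt (32 * Real.exp 1 ^ 3) * Msup ρ φ) ^ (2 * m) := by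
  have hρi : Integrable ρ (volume : Measure (Torus d)) := by
    by_contra h
    rw [integral_undef h] at hρ1
    norm_num at hρ1
  set μ : Measure (Torus d) := volume.withDensity (fun x => ENNReal.ofReal (ρ x)) with hμ
  have hμp : IsProbabilityMeasure μ := by
    refine ⟨?_⟩
    rw [hμ, withDensity_apply _ MeasurableSet.univ, Measure.restrict_univ,
      ← ofReal_integral_eq_lintegral_ofReal hρi (Filter.Eventually.of_forall hρ0), hρ1,
      ENNReal.ofReal_one]
  have hconv : ∀ g : Torus d → ℝ, ∫ x, g x ∂μ = ∫ x, g x * ρ x := by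
    intro g
    rw [hμ, integral_withDensity_eq_integral_toReal_smul hρmeas.ennreal_ofReal
      (Filter.Eventually.of_forall fun x => ENNReal.ofReal_lt_top)]
    refine integral_congr_ae (Filter.Eventually.of_forall fun x => ?_)
    simp only [ENNReal.toReal_ofReal (hρ0 x), smul_eq_mul, mul_comm]
  have h1 : ∀ z z', ∫ x, φ x z z' ∂μ = 0 := by
    intro z z'
    rw [hconv, hcancel1]
  have h2 : ∀ x, ∫ z, ∫ z', φ x z z' ∂μ ∂μ = 0 := by
    intro x
    rw [hconv, ← hcancel2 x]
    refine integral_congr_ae (Filter.Eventually.of_forall fun z => ?_)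
    simp only
    rw [hconv, ← integral_mul_const]
    refine integral_congr_ae (Filter.Eventually.of_forall fun z' => ?_)
    simp only
    ring
  have hC0 : 0 ≤ C := (abs_nonneg _).trans (hφbdd 0 0 0)
  set F : Torus d → ℝ := fun x => ⨆ z, ⨆ z', |φ x z z'| with hFdef
  have hF : AEMeasurable F μ := sup_aemeasurable μ φ hφmeas C hφbdd
  have hF0 : ∀ x, 0 ≤ F x := fun x =>
    Real.iSup_nonneg fun z => Real.iSup_nonneg fun z' => abs_nonneg _
  have hFin : ∀ x z, (⨆ z', |φ x z z'|) ≤ C := fun x z => ciSup_le fun z' => hφbdd x z z'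
  have hFC : ∀ x, F x ≤ C := fun x => ciSup_le fun z => hFin x z
  have hφF : ∀ x z z', |φ x z z'| ≤ F x := by
    intro x z z'
    have a1 : |φ x z z'| ≤ ⨆ z', |φ x z z'| :=
      le_ciSup (f := fun z' => |φ x z z'|) ⟨C, by rintro _ ⟨w, rfl⟩; exact hφbdd x z w⟩ z'
    have a2 : (⨆ z', |φ x z z'|) ≤ F x :=
      le_ciSup (f := fun z => ⨆ z', |φ x z z'|) ⟨C, by rintro _ ⟨w, rfl⟩; exact hFin x w⟩ z
    exact a1.trans a2
  have hMp : ∀ p : ℝ, Mp ρ φ p = (∫ x, F x ^ p ∂μ) ^ (1 / p) := by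
    intro p
    rw [hconv]
    rfl
  have hI0 : ∀ p : ℝ, 0 ≤ ∫ x, F x ^ p ∂μ := fun p =>
    integral_nonneg fun x => Real.rpow_nonneg (hF0 x) p
  have hMp0 : ∀ p : ℝ, 0 ≤ Mp ρ φ p := by
    intro p
    rw [hMp]
    exact Real.rpow_nonneg (hI0 p) _
  have hMpC : ∀ p : ℝ, 1 ≤ p → Mp ρ φ p ≤ C := by
    intro p hp
    have hp0 : 0 < p := by linarith
    have b1 : ∫ x, F x ^ p ∂μ ≤ C ^ p := by
      have hb : ∀ x, ‖F x ^ p‖ ≤ C ^ p := by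
        intro x
        rw [Real.norm_eq_abs, abs_of_nonneg (Real.rpow_nonneg (hF0 x) p)]
        exact Real.rpow_le_rpow (hF0 x) (hFC x) hp0.le
      have := norm_integral_le_of_norm_le_const (μ := μ) (Filter.Eventually.of_forall hb)
      simp only [probReal_univ, mul_one] at this
      exact (Real.le_norm_self _).trans this
    rw [hMp]
    calc _ ≤ (C ^ p) ^ (1 / p) := Real.rpow_le_rpow (hI0 p) b1 (by positivity)
      _ = C := by rw [← Real.rpow_mul hC0, mul_one_div_cancel hp0.ne', Real.rpow_one]
  have hS0 : 0 ≤ Msup ρ φ :=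
    Real.iSup_nonneg fun p => div_nonneg (hMp0 _) (zero_le_one.trans p.2)
  have hSle : ∀ p : ℝ, 1 ≤ p → Mp ρ φ p / p ≤ Msup ρ φ := by
    intro p hp
    refine le_ciSup (f := fun p : {p : ℝ // 1 ≤ p} => Mp ρ φ (p : ℝ) / (p : ℝ)) ⟨C, ?_⟩ ⟨p, hp⟩
    rintro _ ⟨q, rfl⟩
    exact (div_le_self (hMp0 _) q.2).trans (hMpC _ q.2)
  have hS : ∀ k : ℕ, 1 ≤ k → ∫ x, F x ^ k ∂μ ≤ (Msup ρ φ * k) ^ k := by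
    intro k hk
    have hk1 : (1 : ℝ) ≤ k := by exact_mod_cast hk
    have hk0 : (0 : ℝ) < k := by linarith
    have c1 : Mp ρ φ k ≤ Msup ρ φ * k := (div_le_iff₀ hk0).1 (hSle k hk1)
    have c2 : ∫ x, F x ^ k ∂μ = Mp ρ φ k ^ k := by
      rw [hMp, ← Real.rpow_natCast, ← Real.rpow_mul (hI0 _), one_div_mul_cancel hk0.ne',
        Real.rpow_one]
      simp only [Real.rpow_natCast]
    rw [c2]
    exact pow_le_pow_left₀ (hMp0 _) c1 k
  have key := abstract_bound (N := N) μ φ hφmeas C hφbdd h1 h2 F hF hF0 hFC hφF (Msup ρ φ) hS0 hS m hm h4m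
  have hmeasP : Measurable (fun Y : Fin N → Torus d => ∏ i, ρ (Y i)) :=
    Finset.measurable_fun_prod _ fun i _ => hρmeas.comp (measurable_pi_apply i)
  have hpi := pi_density (ι := Fin N) (volume : Measure (Torus d)) ρ hρmeas hρ0 hρi
  rw [hμ, hpi, integral_withDensity_eq_integral_toReal_smul hmeasP.ennreal_ofReal
      (Filter.Eventually.of_forall fun x => ENNReal.ofReal_lt_top)] at key
  refine le_trans (le_of_eq ?_) key
  congr 1
  rw [volume_pi]
  refine integral_congr_ae (Filter.Eventually.of_forall fun Y => ?_)
  simp only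
  rw [ENNReal.toReal_ofReal (Finset.prod_nonneg fun i _ => hρ0 (Y i)), smul_eq_mul, mul_comm]
end

section
/- Let ρ̄ be a probability density on 𝕋^d and φ a bounded measurable function on 𝕋^{3d} satisfying both cancellations ∫ φ(x,z,z') ρ̄(x) dx = 0 for all z,z' and ∫∫ φ(x,z,z') ρ̄(z)ρ̄(z') dz dz' = 0 for all x, and suppose sup_{p≥1} M_p/p < 1/(6e^2), where M_p = ‖sup_{z,z'}|φ(·,z,z')|‖_{L^p(ρ̄ dx)}. Then ∫_{𝕋^{dN}} ρ̄^{⊗N} exp( N^{−2} ∑_{i,j,k=1}^N φ(x_i,x_j,x_k) ) dX ≤ 2( 1 + 4α/(1−α)^3 + 1/(1−β) ), where α = (√(32e^3) sup_{p≥1} M_p/p)^2 < 1 and β = (3e^2 sup_{p≥1} M_p/p)^2 < 1, uniformly in N. -/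
open MeasureTheory

section

open ProbabilityTheory

theorem analytic_compact_approx {α : Type*} [TopologicalSpace α] [PolishSpace α]
    [MeasurableSpace α] [BorelSpace α] (μ : Measure α) [IsFiniteMeasure μ]
    (f : (ℕ → ℕ) → α) (hf : Continuous f) (c : ENNReal) (hc : c < μ (Set.range f)) :
    ∃ K ⊆ Set.range f, IsCompact K ∧ c ≤ μ K := by
  have step : ∀ (k : ℕ) (T : {T : Set (ℕ → ℕ) // c < μ (f '' T)}),
      ∃ j : ℕ, c < μ (f '' (T.1 ∩ {x | x k ≤ j})) := by
    rintro k ⟨T, hT⟩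
    have hU : f '' T = ⋃ j : ℕ, f '' (T ∩ {x | x k ≤ j}) := by
      rw [← Set.image_iUnion, ← Set.inter_iUnion]
      congr 1
      ext x
      simp only [Set.mem_inter_iff, Set.mem_iUnion, Set.mem_ofPred_eq]
      exact ⟨fun h => ⟨h, x k, le_rfl⟩, fun h => h.1⟩
    have hm : Monotone fun j : ℕ => f '' (T ∩ {x | x k ≤ j}) := by
      intro i j hij
      apply Set.image_mono
      rintro x ⟨h1, h2⟩
      exact ⟨h1, le_trans h2 hij⟩
    rw [hU, hm.measure_iUnion] at hT
    exact lt_iSup_iff.1 hT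
  choose J hJ using step
  let T : ℕ → {T : Set (ℕ → ℕ) // c < μ (f '' T)} := fun k =>
    Nat.rec ⟨Set.univ, by simpa using hc⟩ (fun k T => ⟨_, hJ k T⟩) k
  let n : ℕ → ℕ := fun k => J k (T k)
  have hTs : ∀ k, (T (k+1)).1 = (T k).1 ∩ {x | x k ≤ n k} := fun k => rfl
  have hT : ∀ k, ∀ x ∈ (T k).1, ∀ i < k, x i ≤ n i := by
    intro k
    induction k with
    | zero => intro x _ i hi; omega
    | succ k ih =>
      intro x hx i hi
      rw [hTs] at hx
      rcases Nat.lt_succ_iff_lt_or_eq.1 hi with h | h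
      · exact ih x hx.1 i h
      · subst h; exact hx.2
  let K : Set (ℕ → ℕ) := Set.pi Set.univ fun i => Set.Iic (n i)
  have hK : IsCompact K := isCompact_univ_pi fun i => (Set.finite_Iic (n i)).isCompact
  refine ⟨f '' K, Set.image_subset_range _ _, hK.image hf, ?_⟩
  by_contra hlt
  push Not at hlt
  obtain ⟨U, hKU, hU, hμU⟩ := Set.exists_isOpen_lt_of_lt _ _ hlt
  have hex : ∃ k, (T k).1 ⊆ f ⁻¹' U := by
    by_contra hne
    push Not at hne
    have hne' : ∀ k, ∃ x ∈ (T k).1, x ∉ f ⁻¹' U := fun k => Set.not_subset.1 (hne k)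
    choose x hxT hxU using hne'
    let y : ℕ → ℕ → ℕ := fun k i => min (x k i) (n i)
    have hyK : ∀ k, y k ∈ K := fun k i _ => Set.mem_Iic.2 (min_le_right (x k i) (n i))
    obtain ⟨z, hz, ψ, hψ, hlim⟩ := hK.tendsto_subseq hyK
    have hlim' : Filter.Tendsto (x ∘ ψ) Filter.atTop (nhds z) := by
      rw [tendsto_pi_nhds] at hlim ⊢
      intro i
      refine (hlim i).congr' ?_
      filter_upwards [Filter.eventually_gt_atTop i] with k hk
      have : i < ψ k := lt_of_lt_of_le hk hψ.le_apply
      exact min_eq_left (hT (ψ k) _ (hxT _) i this)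
    have hzU : z ∈ f ⁻¹' U := hKU ⟨z, hz, rfl⟩
    have := hlim'.eventually ((hU.preimage hf).mem_nhds hzU)
    obtain ⟨k, hk⟩ := this.exists
    exact hxU _ hk
  obtain ⟨k, hk⟩ := hex
  have h1 : c < μ (f '' (T k).1) := (T k).2
  have h2 : μ (f '' (T k).1) ≤ μ U := measure_mono (Set.image_subset_iff.2 hk)
  exact absurd (h1.trans_le h2) (not_lt.2 hμU.le)

theorem analytic_nullMeasurable {α : Type*} [TopologicalSpace α] [PolishSpace α]
    [MeasurableSpace α] [BorelSpace α] (μ : Measure α) [IsFiniteMeasure μ]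
    {s : Set α} (hs : AnalyticSet s) : NullMeasurableSet s μ := by
  rw [AnalyticSet] at hs
  rcases hs with rfl | ⟨f, hf, rfl⟩
  · exact nullMeasurableSet_empty
  by_cases h0 : μ (Set.range f) = 0
  · exact NullMeasurableSet.of_null h0
  obtain ⟨u, -, hu, hlim⟩ := exists_seq_strictMono_tendsto' (pos_iff_ne_zero.2 h0)
  choose K hKs hK hμ using fun k => analytic_compact_approx μ f hf (u k) (hu k).2
  have hm : MeasurableSet (⋃ k, K k) := MeasurableSet.iUnion fun k => (hK k).measurableSet
  have hsub : (⋃ k, K k) ⊆ Set.range f := Set.iUnion_subset hKs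
  have hge : μ (Set.range f) ≤ μ (⋃ k, K k) :=
    le_of_tendsto' hlim fun k => (hμ k).trans (measure_mono (Set.subset_iUnion K k))
  have : (⋃ k, K k) =ᵐ[μ] Set.range f :=
    ae_eq_of_subset_of_measure_ge hsub hge hm.nullMeasurableSet (measure_ne_top _ _)
  exact hm.nullMeasurableSet.congr this

/-- the supremum function has an everywhere-majorant equal to it a.e. -/
theorem exists_majorant {Ω : Type*} [TopologicalSpace Ω] [PolishSpace Ω] [Nonempty Ω]
    [MeasurableSpace Ω] [BorelSpace Ω] (μ : Measure Ω) [IsFiniteMeasure μ]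
    (φ : Ω → Ω → Ω → ℝ)
    (hφ : Measurable fun p : Ω × Ω × Ω => φ p.1 p.2.1 p.2.2)
    (C : ℝ) (hC : ∀ x z z', |φ x z z'| ≤ C) :
    ∃ F : Ω → ℝ, Measurable F ∧ (∀ x, 0 ≤ F x) ∧ (∀ x, F x ≤ C) ∧
      (∀ x z z', |φ x z z'| ≤ F x) ∧ F =ᵐ[μ] fun x => ⨆ z, ⨆ z', |φ x z z'| := by
  set S : Ω → ℝ := fun x => ⨆ z, ⨆ z', |φ x z z'| with hSdef
  have b1 : ∀ x z, BddAbove (Set.range fun z' => |φ x z z'|) := fun x z =>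
    ⟨C, by rintro _ ⟨z', rfl⟩; exact hC x z z'⟩
  have h1 : ∀ x z, ⨆ z', |φ x z z'| ≤ C := fun x z => ciSup_le fun z' => hC x z z'
  have b2 : ∀ x, BddAbove (Set.range fun z => ⨆ z', |φ x z z'|) := fun x =>
    ⟨C, by rintro _ ⟨z, rfl⟩; exact h1 x z⟩
  have hSle : ∀ x z z', |φ x z z'| ≤ S x := fun x z z' =>
    (le_ciSup (b1 x z) z').trans (le_ciSup (b2 x) z)
  have hSC : ∀ x, S x ≤ C := fun x => ciSup_le fun z => h1 x z
  have hS0 : ∀ x, 0 ≤ S x := fun x =>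
    (abs_nonneg _).trans (hSle x (Classical.arbitrary Ω) (Classical.arbitrary Ω))
  have hnull : NullMeasurable S μ := by
    apply measurable_of_Ioi (δ := NullMeasurableSpace Ω μ)
    intro a
    have : S ⁻¹' Set.Ioi a = Prod.fst '' {p : Ω × Ω × Ω | a < |φ p.1 p.2.1 p.2.2|} := by
      ext x
      simp only [Set.mem_preimage, Set.mem_Ioi, Set.mem_image, Set.mem_ofPred_eq, Prod.exists,
        exists_and_right, exists_eq_right]
      constructor
      · intro h
        obtain ⟨z, hz⟩ := exists_lt_of_lt_ciSup h
        obtain ⟨z', hz'⟩ := exists_lt_of_lt_ciSup hz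
        exact ⟨z, z', hz'⟩
      · rintro ⟨z, z', h⟩
        exact h.trans_le (hSle x z z')
    change NullMeasurableSet (S ⁻¹' Set.Ioi a) μ
    rw [this]
    have hm : MeasurableSet {p : Ω × Ω × Ω | a < |φ p.1 p.2.1 p.2.2|} :=
      measurableSet_lt measurable_const hφ.abs
    exact analytic_nullMeasurable μ (hm.analyticSet.image_of_continuous continuous_fst)
  have hae : AEMeasurable S μ := hnull.aemeasurable
  classical
  set Z : Set Ω := toMeasurable μ {x | S x ≠ hae.mk S x} with hZ
  have hZm : MeasurableSet Z := measurableSet_toMeasurable _ _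
  have hZ0 : μ Z = 0 := by
    rw [hZ, measure_toMeasurable]; exact hae.ae_eq_mk
  have hZc : ∀ x, x ∉ Z → hae.mk S x = S x := by
    intro x hx
    by_contra hne
    exact hx (subset_toMeasurable _ _ (fun h => hne h.symm))
  have hFS : ∀ x, x ∉ Z → Z.piecewise (fun _ => C) (hae.mk S) x = S x := fun x hx => by
    rw [Set.piecewise_eq_of_notMem _ _ _ hx, hZc x hx]
  have hFC : ∀ x, x ∈ Z → Z.piecewise (fun _ => C) (hae.mk S) x = C := fun x hx => by
    rw [Set.piecewise_eq_of_mem _ _ _ hx]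
  refine ⟨Z.piecewise (fun _ => C) (hae.mk S), ?_, ?_, ?_, ?_, ?_⟩
  · exact Measurable.piecewise hZm measurable_const hae.measurable_mk
  · intro x
    by_cases hx : x ∈ Z
    · rw [hFC x hx]; exact (hS0 x).trans (hSC x)
    · rw [hFS x hx]; exact hS0 x
  · intro x
    by_cases hx : x ∈ Z
    · rw [hFC x hx]
    · rw [hFS x hx]; exact hSC x
  · intro x z z'
    by_cases hx : x ∈ Z
    · rw [hFC x hx]; exact hC x z z'
    · rw [hFS x hx]; exact hSle x z z'
  · have : ∀ᵐ x ∂μ, x ∉ Z := measure_eq_zero_iff_ae_notMem.1 hZ0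
    filter_upwards [this] with x hx using hFS x hx

theorem ibm {E : Type*} [MeasurableSpace E] {μ : Measure E} [IsFiniteMeasure μ] {f : E → ℝ}
    (hf : Measurable f) (C : ℝ) (h : ∀ x, |f x| ≤ C) : Integrable f μ :=
  Integrable.of_bound hf.aestronglyMeasurable C (ae_of_all _ h)

theorem hasSum_exp_real (x : ℝ) :
    HasSum (fun n : ℕ => x ^ n / (n.factorial : ℝ)) (Real.exp x) := by
  rw [Real.exp_eq_exp_ℝ]; exact NormedSpace.expSeries_div_hasSum_exp x

theorem hasSum_exp_tail (x : ℝ) :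
    HasSum (fun n : ℕ => x ^ (n+2) / ((n+2).factorial : ℝ)) (Real.exp x - 1 - x) := by
  have h := (hasSum_nat_add_iff' 2).2 (hasSum_exp_real x)
  simpa [Finset.sum_range_succ, sub_sub] using h

theorem exp_le_quad (h w : ℝ) (hh : |h| ≤ 1) (hw : 0 ≤ w) :
    Real.exp (w * h) ≤ 1 + w * h + h ^ 2 * (Real.exp w - 1 - w) := by
  have h1 := hasSum_exp_tail (w * h)
  have h2 := (hasSum_exp_tail w).mul_left (h ^ 2)
  have := hasSum_le (fun n => ?_) h1 h2
  · linarith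
  · have hp : h ^ n ≤ 1 := (le_abs_self _).trans (by rw [abs_pow]; exact pow_le_one₀ (abs_nonneg _) hh)
    have e : (w * h) ^ (n+2) / ((n+2).factorial : ℝ) =
      (h ^ 2 * (w ^ (n+2) / ((n+2).factorial : ℝ))) * h ^ n := by ring
    rw [e]
    exact mul_le_of_le_one_right (by positivity) hp

theorem gauss_int : Integrable (fun g : ℝ => Real.exp (3/8 * g ^ 2)) (gaussianReal 0 1) ∧
    ∫ g : ℝ, Real.exp (3/8 * g ^ 2) ∂(gaussianReal 0 1) = 2 := by
  have e : ∀ g : ℝ, gaussianPDFReal 0 1 g * Real.exp (3/8 * g ^ 2)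
      = (√(2 * Real.pi))⁻¹ * Real.exp (-(1/8) * g ^ 2) := by
    intro g
    simp only [gaussianPDFReal, sub_zero, NNReal.coe_one, mul_one]
    rw [mul_assoc, ← Real.exp_add]
    congr 2; ring
  constructor
  · rw [gaussianReal_of_var_ne_zero _ one_ne_zero,
      integrable_withDensity_iff_integrable_smul₀' (by fun_prop) (by simp [gaussianPDF])]
    have : (fun g : ℝ => (gaussianPDF 0 1 g).toReal • Real.exp (3/8 * g ^ 2)) =
        fun g => (√(2 * Real.pi))⁻¹ * Real.exp (-(1/8) * g ^ 2) := by
      funext g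
      rw [toReal_gaussianPDF, smul_eq_mul, e]
    rw [this]
    exact (integrable_exp_neg_mul_sq (by norm_num)).const_mul _
  · rw [integral_gaussianReal_eq_integral_smul one_ne_zero]
    simp only [smul_eq_mul, e]
    rw [integral_const_mul, integral_gaussian, ← Real.sqrt_inv, ← Real.sqrt_mul (by positivity)]
    have : (2 * Real.pi)⁻¹ * (Real.pi / (1/8)) = 2 ^ 2 := by
      field_simp; norm_num
    rw [this, Real.sqrt_sq (by norm_num)]

theorem gauss_mgf (t : ℝ) : Integrable (fun g : ℝ => Real.exp (t * g)) (gaussianReal 0 1) ∧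
    ∫ g : ℝ, Real.exp (t * g) ∂(gaussianReal 0 1) = Real.exp (t ^ 2 / 2) := by
  constructor
  · exact integrable_exp_mul_gaussianReal t
  · have := mgf_gaussianReal (p := gaussianReal 0 1) (X := id) (μ := 0) (v := 1) (by simp) t
    simpa [mgf] using this

theorem hoeff {E : Type*} [MeasurableSpace E] {μ : Measure E} [IsProbabilityMeasure μ] {f : E → ℝ}
    (hf : Measurable f) (h : ∀ x, |f x| ≤ 1) (h0 : ∫ x, f x ∂μ = 0) (t : ℝ) :
    ∫ x, Real.exp (t * f x) ∂μ ≤ Real.exp (t ^ 2 / 2) := by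
  have := (hasSubgaussianMGF_of_mem_Icc_of_integral_eq_zero (a := -1) (b := 1) hf.aemeasurable
    (ae_of_all μ fun x => abs_le.1 (h x)) h0).mgf_le t
  refine this.trans (le_of_eq ?_)
  congr 1
  have : ((‖(1:ℝ) - -1‖₊ / 2 : NNReal) : ℝ) = 1 := by
    rw [NNReal.coe_div, coe_nnnorm]; norm_num
  rw [NNReal.coe_pow, this]; ring

variable {Ω : Type*} [MeasurableSpace Ω]

theorem factor_pair (μ : Measure Ω) [IsProbabilityMeasure μ] (K : ℕ) (f : Ω × Ω → ℝ)
    (hf : Measurable f) (C : ℝ) (hC : ∀ p, |f p| ≤ C) :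
    ∫ ζ : (Fin K → Ω) × (Fin K → Ω), ∏ b, f (ζ.1 b, ζ.2 b)
      ∂((Measure.pi fun _ => μ).prod (Measure.pi fun _ => μ))
      = (∫ p, f p ∂(μ.prod μ)) ^ K := by
  rw [integral_prod]
  · have : ∀ x : Fin K → Ω, ∫ y : Fin K → Ω, ∏ b, f (x b, y b) ∂(Measure.pi fun _ => μ)
        = ∏ b, ∫ y, f (x b, y) ∂μ := fun x =>
      integral_fintype_prod_eq_prod (fun b y => f (x b, y))
    simp only [this]
    rw [integral_fintype_prod_eq_pow (fun x => ∫ y, f (x, y) ∂μ), Fintype.card_fin,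
      integral_prod _ (ibm hf C hC)]
  · apply ibm (by fun_prop) (C ^ K)
    intro ζ
    rw [Finset.abs_prod]
    calc _ ≤ ∏ b : Fin K, C := Finset.prod_le_prod (fun _ _ => abs_nonneg _) fun _ _ => hC _
      _ = _ := by simp

theorem quad_exp (μ : Measure Ω) [IsProbabilityMeasure μ] (K : ℕ) (hK : 0 < K) (ψ : Ω × Ω → ℝ)
    (hψ : Measurable ψ) (h1 : ∀ p, |ψ p| ≤ 1) (h0 : ∫ p, ψ p ∂(μ.prod μ) = 0) :
    ∫ ζ : (Fin K → Ω) × (Fin K → Ω), Real.exp (K * (3/8) * ((1 / K) * ∑ b, ψ (ζ.1 b, ζ.2 b)) ^ 2)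
      ∂((Measure.pi fun _ => μ).prod (Measure.pi fun _ => μ)) ≤ 2 := by
  set ν := ((Measure.pi fun _ : Fin K => μ).prod (Measure.pi fun _ : Fin K => μ))
  have hK' : (0:ℝ) < K := by exact_mod_cast hK
  set r : ℝ := √(3 * K / 4) with hr
  have hr2 : r ^ 2 = 3 * K / 4 := Real.sq_sqrt (by positivity)
  set h : (Fin K → Ω) × (Fin K → Ω) → ℝ := fun ζ => (1 / K) * ∑ b, ψ (ζ.1 b, ζ.2 b) with hh
  have hm : Measurable h := by
    apply Measurable.const_mul
    exact Finset.measurable_sum _ fun b _ => hψ.comp (by fun_prop)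
  have hb : ∀ ζ, |h ζ| ≤ 1 := by
    intro ζ
    simp only [hh]
    rw [abs_mul, abs_of_pos (by positivity), one_div, inv_mul_le_iff₀ hK', mul_one]
    calc _ ≤ ∑ b : Fin K, |ψ (ζ.1 b, ζ.2 b)| := Finset.abs_sum_le_sum_abs _ _
      _ ≤ ∑ b : Fin K, 1 := Finset.sum_le_sum fun _ _ => h1 _
      _ = K := by simp
  have e1 : ∀ ζ, Real.exp (K * (3/8) * (h ζ) ^ 2)
      = ∫ g : ℝ, Real.exp ((r * h ζ) * g) ∂(gaussianReal 0 1) := by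
    intro ζ
    rw [(gauss_mgf _).2]
    congr 1
    rw [mul_pow r, hr2]; ring
  change ∫ ζ, Real.exp (K * (3/8) * (h ζ) ^ 2) ∂ν ≤ 2
  simp only [e1]
  rw [integral_integral_swap]
  · have e2 : ∀ g : ℝ, ∫ ζ, Real.exp ((r * h ζ) * g) ∂ν =
        (∫ p, Real.exp ((r * g / K) * ψ p) ∂(μ.prod μ)) ^ K := by
      intro g
      rw [← factor_pair μ K _ (by fun_prop) (Real.exp |r * g / K|)]
      · apply integral_congr_ae
        refine ae_of_all _ fun ζ => ?_
        simp only [hh]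
        rw [← Real.exp_sum, ← Finset.mul_sum]
        congr 1
        ring
      · intro p
        rw [abs_of_pos (Real.exp_pos _), Real.exp_le_exp]
        calc _ ≤ |(r * g / K) * ψ p| := le_abs_self _
          _ = |r * g / K| * |ψ p| := abs_mul _ _
          _ ≤ _ := mul_le_of_le_one_right (abs_nonneg _) (h1 p)
    rw [← gauss_int.2]
    simp only [e2]
    apply integral_mono_of_nonneg
    · exact ae_of_all _ fun g => pow_nonneg (integral_nonneg fun _ => (Real.exp_pos _).le) _
    · exact gauss_int.1
    · refine ae_of_all _ fun g => ?_
      calc _ ≤ (Real.exp ((r * g / K) ^ 2 / 2)) ^ K :=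
            pow_le_pow_left₀ (integral_nonneg fun _ => (Real.exp_pos _).le) (hoeff hψ h1 h0 _) K
        _ = Real.exp (3/8 * g ^ 2) := by
            rw [← Real.exp_nat_mul]
            congr 1
            rw [div_pow, mul_pow, hr2]
            field_simp
            ring
  · have hi : Integrable (fun g : ℝ => Real.exp (r * g) + Real.exp (-r * g)) (gaussianReal 0 1) :=
      (gauss_mgf r).1.add (gauss_mgf (-r)).1
    refine (hi.comp_snd ν).mono' (by fun_prop) (ae_of_all _ ?_)
    rintro ⟨ζ, g⟩
    simp only [Function.uncurry, Real.norm_eq_abs, abs_of_pos (Real.exp_pos _)]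
    have hr0 : 0 ≤ r := Real.sqrt_nonneg _
    have : r * h ζ * g ≤ |r * g| := by
      calc _ ≤ |r * h ζ * g| := le_abs_self _
        _ = |r * g| * |h ζ| := by simp only [abs_mul]; ring
        _ ≤ _ := mul_le_of_le_one_right (abs_nonneg _) (hb ζ)
    refine (Real.exp_le_exp.2 this).trans ?_
    rcases abs_cases (r * g) with ⟨h, _⟩ | ⟨h, _⟩ <;> rw [h]
    · linarith [Real.exp_pos (-r * g)]
    · rw [← neg_mul]; linarith [Real.exp_pos (r * g)]

theorem core (μ : Measure Ω) [IsProbabilityMeasure μ] (K : ℕ) (hK : 0 < K)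
    (φ : Ω → Ω → Ω → ℝ) (hφ : Measurable fun p : Ω × Ω × Ω => φ p.1 p.2.1 p.2.2)
    (F : Ω → ℝ) (hF : Measurable F) (hF0 : ∀ x, 0 ≤ F x) (C : ℝ) (hFC : ∀ x, F x ≤ C)
    (hφF : ∀ x z z', |φ x z z'| ≤ F x)
    (hc1 : ∀ z z', ∫ x, φ x z z' ∂μ = 0)
    (hc2 : ∀ x, ∫ p, φ x p.1 p.2 ∂(μ.prod μ) = 0)
    (hG : ∫ x, (Real.exp (6 * F x) - 1 - 6 * F x) ∂μ ≤ 3/8) :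
    ∫ q : (Fin K → Ω) × ((Fin K → Ω) × (Fin K → Ω)),
      Real.exp ((6 / K) * ∑ a, ∑ b, φ (q.1 a) (q.2.1 b) (q.2.2 b))
      ∂((Measure.pi fun _ => μ).prod ((Measure.pi fun _ => μ).prod (Measure.pi fun _ => μ))) ≤ 2 := by
  set ν := ((Measure.pi fun _ : Fin K => μ).prod (Measure.pi fun _ : Fin K => μ))
  have hK' : (0:ℝ) < K := by exact_mod_cast hK
  have hφ3 : ∀ {β : Type _} [MeasurableSpace β] {f g h : β → Ω}, Measurable f → Measurable g →
      Measurable h → Measurable fun x => φ (f x) (g x) (h x) := fun hf hg hh =>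
    hφ.comp (hf.prodMk (hg.prodMk hh))
  set h : Ω → (Fin K → Ω) × (Fin K → Ω) → ℝ :=
    fun x ζ => (1 / K) * ∑ b, φ x (ζ.1 b) (ζ.2 b) / F x with hh
  have hψ1 : ∀ x z z', |φ x z z' / F x| ≤ 1 := by
    intro x z z'
    rw [abs_div, abs_of_nonneg (hF0 x)]
    exact div_le_one_of_le₀ (hφF x z z') (hF0 x)
  have hFψ : ∀ x z z', F x * (φ x z z' / F x) = φ x z z' := by
    intro x z z'
    by_cases h0 : F x = 0
    · have := hφF x z z'
      rw [h0] at this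
      have : φ x z z' = 0 := abs_nonpos_iff.1 this
      simp [this]
    · field_simp
  have hhm : Measurable fun p : Ω × ((Fin K → Ω) × (Fin K → Ω)) => h p.1 p.2 := by
    apply Measurable.const_mul
    refine Finset.measurable_sum _ fun b _ => Measurable.div ?_ (hF.comp measurable_fst)
    exact hφ3 (by fun_prop) (by fun_prop) (by fun_prop)
  have hhm1 : ∀ ζ, Measurable fun x => h x ζ := fun ζ =>
    hhm.comp (measurable_id.prodMk measurable_const)
  have hhm2 : ∀ x, Measurable fun ζ => h x ζ := fun x =>
    hhm.comp (measurable_const.prodMk measurable_id)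
  have hhb : ∀ x ζ, |h x ζ| ≤ 1 := by
    intro x ζ
    simp only [hh]
    rw [abs_mul, abs_of_pos (by positivity), one_div, inv_mul_le_iff₀ hK', mul_one]
    calc _ ≤ ∑ b : Fin K, |φ x (ζ.1 b) (ζ.2 b) / F x| := Finset.abs_sum_le_sum_abs _ _
      _ ≤ ∑ b : Fin K, 1 := Finset.sum_le_sum fun _ _ => hψ1 _ _ _
      _ = K := by simp
  have hFh : ∀ x ζ, F x * h x ζ = (1 / K) * ∑ b, φ x (ζ.1 b) (ζ.2 b) := by
    intro x ζ
    simp only [hh]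
    rw [mul_left_comm, Finset.mul_sum]
    simp only [hFψ]
  have hC0 : ∀ x ζ, |F x * h x ζ| ≤ C := by
    intro x ζ
    rw [abs_mul, abs_of_nonneg (hF0 x)]
    exact (mul_le_of_le_one_right (hF0 x) (hhb x ζ)).trans (hFC x)
  set G : Ω → ℝ := fun x => Real.exp (6 * F x) - 1 - 6 * F x with hGdef
  have hGm : Measurable G := by fun_prop
  have hG0 : ∀ x, 0 ≤ G x := fun x => by
    have := Real.add_one_le_exp (6 * F x); simp only [hGdef]; linarith
  have hGb : ∀ x, G x ≤ Real.exp (6 * C) := fun x => by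
    have : Real.exp (6 * F x) ≤ Real.exp (6 * C) := Real.exp_le_exp.2 (by linarith [hFC x])
    simp only [hGdef]; linarith [hF0 x]
  have hGi : Integrable G μ := ibm hGm _ fun x => by rw [abs_of_nonneg (hG0 x)]; exact hGb x
  set κ := ∫ x, G x ∂μ with hκ
  have hκ0 : 0 ≤ κ := integral_nonneg hG0
  set w : Ω → ℝ := fun x => (G x + (3/8 - κ)) / (3/8) with hw
  have hwm : Measurable w := by fun_prop
  have hw0 : ∀ x, 0 ≤ w x := fun x => by
    have := hG0 x
    exact div_nonneg (by linarith) (by norm_num)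
  have hwi : Integrable w μ := (hGi.add (integrable_const _)).div_const _
  have hw1 : ∫ x, w x ∂μ = 1 := by
    simp only [hw]
    rw [integral_div, integral_add hGi (integrable_const _), integral_const]
    simp [← hκ]
  have hGw : ∀ x, G x ≤ 3/8 * w x := fun x => by
    simp only [hw]; linarith
  -- integrability helper
  have hwb : ∀ (f : Ω → ℝ) (D : ℝ), Measurable f → (∀ x, |f x| ≤ D) →
      Integrable (fun x => w x * f x) μ := fun f D hf hD =>
    hwi.mul_bdd (c := D) hf.aestronglyMeasurable (ae_of_all _ hD)
  have hexpb : ∀ x ζ, Real.exp (K * (3/8) * (h x ζ) ^ 2) ≤ Real.exp K := by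
    intro x ζ
    apply Real.exp_le_exp.2
    have : (h x ζ) ^ 2 ≤ 1 := (sq_le_one_iff_abs_le_one _).2 (hhb x ζ)
    nlinarith [sq_nonneg (h x ζ)]
  -- pointwise bound
  have key : ∀ ζ, (∫ x, Real.exp (6 * F x * h x ζ) ∂μ) ^ K ≤
      ∫ x, w x * Real.exp (K * (3/8) * (h x ζ) ^ 2) ∂μ := by
    intro ζ
    have hm := hhm1 ζ
    have i1 : Integrable (fun x => h x ζ ^ 2 * G x) μ :=
      hGi.bdd_mul (c := 1) (by fun_prop) (ae_of_all _ fun x => by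
        rw [norm_pow]; exact pow_le_one₀ (norm_nonneg _) (hhb x ζ))
    have i2 : Integrable (fun x => w x * h x ζ ^ 2) μ :=
      hwb _ 1 (by fun_prop) fun x => by
        rw [abs_pow]; exact pow_le_one₀ (abs_nonneg _) (hhb x ζ)
    have i3 : Integrable (fun x => F x * h x ζ) μ := ibm (by fun_prop) C fun x => hC0 x ζ
    have i4 : Integrable (fun x => w x * Real.exp (K * (3/8) * (h x ζ) ^ 2)) μ :=
      hwb _ (Real.exp K) (by fun_prop) fun x => by
        rw [abs_of_pos (Real.exp_pos _)]; exact hexpb x ζ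
    have z3 : ∫ x, F x * h x ζ ∂μ = 0 := by
      simp only [hFh]
      rw [integral_const_mul, integral_finsetSum]
      · simp [hc1]
      · intro b _
        exact ibm (hφ3 (by fun_prop) (by fun_prop) (by fun_prop)) C fun x =>
          (hφF _ _ _).trans (hFC x)
    set t := ∫ x, w x * h x ζ ^ 2 ∂μ with ht
    have s1 : ∫ x, Real.exp (6 * F x * h x ζ) ∂μ ≤ Real.exp (3/8 * t) := by
      calc _ ≤ ∫ x, (1 + 6 * (F x * h x ζ) + 3/8 * (w x * h x ζ ^ 2)) ∂μ := by
            apply integral_mono_of_nonneg (ae_of_all _ fun x => (Real.exp_pos _).le)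
            · exact ((integrable_const _).add (i3.const_mul _)).add (i2.const_mul _)
            · refine ae_of_all _ fun x => ?_
              have q1 := exp_le_quad (h x ζ) (6 * F x) (hhb x ζ) (by linarith [hF0 x])
              have q2 := mul_le_mul_of_nonneg_left (hGw x) (sq_nonneg (h x ζ))
              simp only [hGdef] at q2
              change Real.exp (6 * F x * h x ζ) ≤ _
              linarith
        _ = 1 + 3/8 * t := by
            have i5 : Integrable (fun x => 1 + 6 * (F x * h x ζ)) μ :=
              (integrable_const _).add (i3.const_mul _)
            rw [integral_add i5 (i2.const_mul _),
              integral_add (integrable_const _) (i3.const_mul _), integral_const_mul,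
              integral_const_mul, z3]
            simp [ht]
        _ ≤ _ := by linarith [Real.add_one_le_exp (3/8 * t)]
    calc _ ≤ (Real.exp (3/8 * t)) ^ K :=
          pow_le_pow_left₀ (integral_nonneg fun _ => (Real.exp_pos _).le) s1 K
      _ = Real.exp (K * (3/8) * t) := by rw [← Real.exp_nat_mul]; ring_nf
      _ = ∫ x, Real.exp (K * (3/8) * t) * ((1 - K * (3/8) * t) * w x
            + K * (3/8) * (w x * h x ζ ^ 2)) ∂μ := by
          rw [integral_const_mul, integral_add (hwi.const_mul _) (i2.const_mul _),
            integral_const_mul, integral_const_mul, hw1, ← ht]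
          ring
      _ ≤ _ := by
          have i6 : Integrable (fun x => Real.exp (K * (3/8) * t) * ((1 - K * (3/8) * t) * w x
            + K * (3/8) * (w x * h x ζ ^ 2))) μ :=
            ((hwi.const_mul _).add (i2.const_mul _)).const_mul _
          refine integral_mono i6 i4 fun x => ?_
          change Real.exp (K * (3/8) * t) * ((1 - K * (3/8) * t) * w x
            + K * (3/8) * (w x * h x ζ ^ 2)) ≤ w x * Real.exp (K * (3/8) * (h x ζ) ^ 2)
          have q := Real.add_one_le_exp (K * (3/8) * h x ζ ^ 2 - K * (3/8) * t)
          have q2 := mul_le_mul_of_nonneg_left q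
            (mul_nonneg (hw0 x) (Real.exp_pos (K * (3/8) * t)).le)
          have q3 : w x * Real.exp (K * (3/8) * t) *
              Real.exp (K * (3/8) * h x ζ ^ 2 - K * (3/8) * t)
              = w x * Real.exp (K * (3/8) * h x ζ ^ 2) := by
            rw [mul_assoc, ← Real.exp_add]; congr 2; ring
          rw [q3] at q2
          refine le_trans (le_of_eq ?_) q2
          ring
  rw [integral_prod_symm]
  · have e1 : ∀ ζ : (Fin K → Ω) × (Fin K → Ω), ∫ y : Fin K → Ω,
        Real.exp ((6 / K) * ∑ a, ∑ b, φ (y a) (ζ.1 b) (ζ.2 b)) ∂(Measure.pi fun _ => μ)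
        = (∫ x, Real.exp (6 * F x * h x ζ) ∂μ) ^ K := by
      intro ζ
      have := integral_fintype_prod_eq_pow (ι := Fin K) (μ := μ)
        (fun x => Real.exp (6 * F x * h x ζ))
      rw [Fintype.card_fin] at this
      rw [← this]
      congr 1
      funext y
      rw [← Real.exp_sum]
      congr 1
      rw [Finset.mul_sum]
      refine Finset.sum_congr rfl fun a _ => ?_
      rw [mul_assoc, hFh]
      ring
    simp only [e1]
    have hint : Integrable (fun p : ((Fin K → Ω) × (Fin K → Ω)) × Ω =>
        w p.2 * Real.exp (K * (3/8) * (h p.2 p.1) ^ 2)) (ν.prod μ) := by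
      refine (hwi.comp_snd ν).mul_bdd (c := Real.exp K) ?_ (ae_of_all _ fun p => ?_)
      · have : Measurable fun p : ((Fin K → Ω) × (Fin K → Ω)) × Ω => h p.2 p.1 :=
          hhm.comp measurable_swap
        exact (Real.measurable_exp.comp ((this.pow_const 2).const_mul _)).aestronglyMeasurable
      · rw [Real.norm_eq_abs, abs_of_pos (Real.exp_pos _)]; exact hexpb _ _
    calc _ ≤ ∫ ζ, ∫ x, w x * Real.exp (K * (3/8) * (h x ζ) ^ 2) ∂μ ∂ν := by
          apply integral_mono_of_nonneg
          · exact ae_of_all _ fun g => pow_nonneg (integral_nonneg fun _ => (Real.exp_pos _).le) _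
          · exact hint.integral_prod_left
          · exact ae_of_all _ key
      _ = ∫ x, ∫ ζ, w x * Real.exp (K * (3/8) * (h x ζ) ^ 2) ∂ν ∂μ :=
          integral_integral_swap hint
      _ ≤ ∫ x, w x * 2 ∂μ := by
          apply integral_mono_of_nonneg
          · exact ae_of_all _ fun x => integral_nonneg fun _ =>
              mul_nonneg (hw0 x) (Real.exp_pos _).le
          · exact hwi.mul_const _
          · refine ae_of_all _ fun x => ?_
            change ∫ ζ, w x * Real.exp (K * (3/8) * (h x ζ) ^ 2) ∂ν ≤ w x * 2
            rw [integral_const_mul]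
            refine mul_le_mul_of_nonneg_left ?_ (hw0 x)
            refine quad_exp μ K hK (fun p => φ x p.1 p.2 / F x) ?_ (fun p => hψ1 _ _ _) ?_
            · exact (hφ3 (by fun_prop) (by fun_prop) (by fun_prop)).div_const _
            · rw [integral_div, hc2, zero_div]
      _ = 2 := by rw [integral_mul_const, hw1, one_mul]
  · have hM : Measurable fun q : (Fin K → Ω) × ((Fin K → Ω) × (Fin K → Ω)) =>
        ∑ a, ∑ b, φ (q.1 a) (q.2.1 b) (q.2.2 b) :=
      Finset.measurable_sum _ fun a _ => Finset.measurable_sum _ fun b _ =>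
        hφ3 (by fun_prop) (by fun_prop) (by fun_prop)
    refine ibm (by fun_prop) (Real.exp ((6 / K) * (K * (K * C)))) fun q => ?_
    rw [abs_of_pos (Real.exp_pos _)]
    apply Real.exp_le_exp.2
    refine mul_le_mul_of_nonneg_left ?_ (by positivity)
    calc _ ≤ ∑ a : Fin K, ∑ b : Fin K, C := Finset.sum_le_sum fun a _ => Finset.sum_le_sum fun b _ =>
            (le_abs_self _).trans ((hφF _ _ _).trans (hFC _))
      _ = _ := by simp

theorem moments (μ : Measure Ω) [IsProbabilityMeasure μ]
    (F : Ω → ℝ) (hF : Measurable F) (hF0 : ∀ x, 0 ≤ F x) (C : ℝ) (hFC : ∀ x, F x ≤ C)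
    (s : ℝ) (hs0 : 0 ≤ s) (hs : s < 1 / (6 * Real.exp 1 ^ 2))
    (hm : ∀ k : ℕ, 1 ≤ k → ∫ x, F x ^ k ∂μ ≤ (k * s) ^ k) :
    ∫ x, (Real.exp (6 * F x) - 1 - 6 * F x) ∂μ ≤ 3/8 ∧ ∫ x, Real.exp (6 * F x) ∂μ ≤ 2 := by
  set θ : ℝ := 6 * Real.exp 1 * s with hθ
  have he : (5/2 : ℝ) < Real.exp 1 := by linarith [Real.exp_one_gt_d9]
  have hθ0 : 0 ≤ θ := by positivity
  have hθ1 : θ ≤ 2/5 := by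
    have h1 : s * (6 * Real.exp 1 ^ 2) < 1 := (lt_div_iff₀ (by positivity)).1 hs
    have h2 : θ * Real.exp 1 < 1 := by rw [hθ]; linarith
    nlinarith
  have habs : ∀ x, |F x| = F x := fun x => abs_of_nonneg (hF0 x)
  have hpi : ∀ k : ℕ, Integrable (fun x => F x ^ k) μ := fun k =>
    ibm (by fun_prop) (C ^ k) fun x => by
      rw [abs_pow, habs]; exact pow_le_pow_left₀ (hF0 x) (hFC x) k
  have hterm : ∀ k : ℕ, ∫ x, (6 * F x) ^ (k+2) / ((k+2).factorial : ℝ) ∂μ ≤ θ ^ 2 * θ ^ k := by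
    intro k
    have e : ∀ x, (6 * F x) ^ (k+2) / ((k+2).factorial : ℝ) =
        6 ^ (k+2) / ((k+2).factorial : ℝ) * F x ^ (k+2) := fun x => by rw [mul_pow]; ring
    simp only [e]
    rw [integral_const_mul]
    have h1 := hm (k+2) (by omega)
    have h2 := Real.pow_div_factorial_le_exp (x := ((k+2 : ℕ) : ℝ)) (by positivity) (k+2)
    have h3 : Real.exp ((k+2 : ℕ) : ℝ) = Real.exp 1 ^ (k+2) := by
      rw [← Real.exp_nat_mul, mul_one]
    rw [h3] at h2
    calc _ ≤ 6 ^ (k+2) / ((k+2).factorial : ℝ) * (((k+2 : ℕ) : ℝ) * s) ^ (k+2) :=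
          mul_le_mul_of_nonneg_left h1 (by positivity)
      _ = 6 ^ (k+2) * s ^ (k+2) * (((k+2 : ℕ) : ℝ) ^ (k+2) / ((k+2).factorial : ℝ)) := by
          rw [mul_pow]; ring
      _ ≤ 6 ^ (k+2) * s ^ (k+2) * Real.exp 1 ^ (k+2) :=
          mul_le_mul_of_nonneg_left h2 (by positivity)
      _ = θ ^ (k+2) := by rw [hθ, mul_pow, mul_pow]; ring
      _ = θ ^ 2 * θ ^ k := by ring
  have hgeo : HasSum (fun k : ℕ => θ ^ 2 * θ ^ k) (θ ^ 2 * (1 - θ)⁻¹) :=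
    (hasSum_geometric_of_lt_one hθ0 (by linarith)).mul_left _
  have hti : ∀ k : ℕ, Integrable (fun x => (6 * F x) ^ (k+2) / ((k+2).factorial : ℝ)) μ := by
    intro k
    simp only [mul_pow]
    exact ((hpi (k+2)).const_mul _).div_const _
  have hnn : ∀ k x, 0 ≤ (6 * F x) ^ (k+2) / ((k+2).factorial : ℝ) := fun k x => by
    have := hF0 x
    positivity
  have hsum : Summable fun k : ℕ => ∫ x, ‖(6 * F x) ^ (k+2) / ((k+2).factorial : ℝ)‖ ∂μ := by
    refine Summable.of_nonneg_of_le (fun k => integral_nonneg fun x => norm_nonneg _)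
      (fun k => ?_) hgeo.summable
    simp only [Real.norm_eq_abs, abs_of_nonneg (hnn k _)]
    exact hterm k
  have hS := hasSum_integral_of_summable_integral_norm hti hsum
  have e2 : ∫ x, (∑' k : ℕ, (6 * F x) ^ (k+2) / ((k+2).factorial : ℝ)) ∂μ =
      ∫ x, (Real.exp (6 * F x) - 1 - 6 * F x) ∂μ := by
    congr 1
    funext x
    exact (hasSum_exp_tail (6 * F x)).tsum_eq
  rw [e2] at hS
  have hle := hasSum_le hterm hS hgeo
  have hG : ∫ x, (Real.exp (6 * F x) - 1 - 6 * F x) ∂μ ≤ 3/8 := by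
    refine hle.trans ?_
    rw [← div_eq_mul_inv, div_le_iff₀ (by linarith)]
    nlinarith
  refine ⟨hG, ?_⟩
  have hexpi : Integrable (fun x => Real.exp (6 * F x)) μ :=
    ibm (by fun_prop) (Real.exp (6 * C)) fun x => by
      rw [abs_of_pos (Real.exp_pos _)]; exact Real.exp_le_exp.2 (by linarith [hFC x])
  have hFi : Integrable F μ := by simpa using hpi 1
  have e3 : ∫ x, (Real.exp (6 * F x) - 1 - 6 * F x) ∂μ
      = ∫ x, Real.exp (6 * F x) ∂μ - 1 - 6 * ∫ x, F x ∂μ := by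
    have i1 : Integrable (fun x => Real.exp (6 * F x) - 1) μ := hexpi.sub (integrable_const _)
    rw [integral_sub i1 (hFi.const_mul _), integral_sub hexpi (integrable_const _), integral_const_mul]
    simp
  have h1 : ∫ x, F x ∂μ ≤ s := by simpa using hm 1 le_rfl
  have h6 : 6 * s ≤ θ := by rw [hθ]; nlinarith
  linarith

theorem perm_avg {N : ℕ} (f : Fin N → Fin N → Fin N → ℝ) (e : Fin 3 ↪ Fin N) :
    (Fintype.card (Fin 3 ↪ Fin N) : ℝ) *
      ∑ σ : Equiv.Perm (Fin N), f (σ (e 0)) (σ (e 1)) (σ (e 2))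
    = (Fintype.card (Equiv.Perm (Fin N)) : ℝ) * ∑ e' : Fin 3 ↪ Fin N, f (e' 0) (e' 1) (e' 2) := by
  have h1 : ∀ e' : Fin 3 ↪ Fin N,
      ∑ σ : Equiv.Perm (Fin N), f (σ (e' 0)) (σ (e' 1)) (σ (e' 2)) =
      ∑ σ : Equiv.Perm (Fin N), f (σ (e 0)) (σ (e 1)) (σ (e 2)) := by
    intro e'
    obtain ⟨τ, hτ⟩ := MulAction.isMultiplyPretransitive_iff.1
      (Equiv.Perm.isMultiplyPretransitive (Fin N) 3) e e'
    subst hτ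
    refine Fintype.sum_equiv (Equiv.mulRight τ) _ _ fun σ => ?_
    rfl
  have h2 : ∀ σ : Equiv.Perm (Fin N), ∑ e' : Fin 3 ↪ Fin N, f (σ (e' 0)) (σ (e' 1)) (σ (e' 2))
      = ∑ e' : Fin 3 ↪ Fin N, f (e' 0) (e' 1) (e' 2) := by
    intro σ
    exact Fintype.sum_equiv (MulAction.toPerm σ) _ _ fun e' => rfl
  have h3 := Finset.sum_comm (s := (Finset.univ : Finset (Fin 3 ↪ Fin N)))
    (t := (Finset.univ : Finset (Equiv.Perm (Fin N))))
    (f := fun e' σ => f (σ (e' 0)) (σ (e' 1)) (σ (e' 2)))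
  simp only [h1, h2] at h3
  simpa using h3

theorem comp_inj_preserving (μ : Measure Ω) [IsProbabilityMeasure μ] {ι ι' : Type*} [Fintype ι]
    [Fintype ι'] (g : ι' → ι) (hg : Function.Injective g) :
    MeasurePreserving (fun (x : ι → Ω) (i : ι') => x (g i)) (Measure.pi fun _ => μ)
      (Measure.pi fun _ => μ) := by
  refine ⟨by fun_prop, ?_⟩
  have h := (iIndepFun_pi (μ := fun _ : ι => μ) (X := fun _ => id)
    (fun _ => aemeasurable_id)).precomp hg
  have h' := (iIndepFun_iff_map_fun_eq_pi_map (μ := Measure.pi fun _ : ι => μ)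
    (f := fun (i : ι') (ω : ι → Ω) => ω (g i))
    (fun i => (measurable_pi_apply (g i)).aemeasurable)).1 h
  rw [h']
  congr 1
  funext i
  exact (measurePreserving_eval (fun _ : ι => μ) (g i)).map_eq

theorem split_preserving (μ : Measure Ω) [IsProbabilityMeasure μ] {ι : Type*} [Fintype ι] (K : ℕ)
    (g : Fin K ⊕ (Fin K ⊕ Fin K) → ι) (hg : Function.Injective g) :
    MeasurePreserving (fun (x : ι → Ω) => ((fun a => x (g (Sum.inl a)),
        (fun b => x (g (Sum.inr (Sum.inl b))), fun b => x (g (Sum.inr (Sum.inr b))))) :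
          (Fin K → Ω) × ((Fin K → Ω) × (Fin K → Ω)))) (Measure.pi fun _ => μ)
      ((Measure.pi fun _ => μ).prod ((Measure.pi fun _ => μ).prod (Measure.pi fun _ => μ))) := by
  have h1 := comp_inj_preserving μ g hg
  have h2 := measurePreserving_sumPiEquivProdPi (X := fun _ : Fin K ⊕ (Fin K ⊕ Fin K) => Ω)
    (fun _ => μ)
  have h3 := measurePreserving_sumPiEquivProdPi (X := fun _ : Fin K ⊕ Fin K => Ω)
    (fun _ => μ)
  have h4 := (MeasurePreserving.id (Measure.pi fun _ : Fin K => μ)).prod h3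
  exact h4.comp (h2.comp h1)

theorem offdiag (μ : Measure Ω) [IsProbabilityMeasure μ] (N : ℕ) (hN : 0 < N)
    (φ : Ω → Ω → Ω → ℝ) (hφ : Measurable fun p : Ω × Ω × Ω => φ p.1 p.2.1 p.2.2)
    (F : Ω → ℝ) (hF : Measurable F) (hF0 : ∀ x, 0 ≤ F x) (C : ℝ) (hFC : ∀ x, F x ≤ C)
    (hφF : ∀ x z z', |φ x z z'| ≤ F x)
    (hc1 : ∀ z z', ∫ x, φ x z z' ∂μ = 0)
    (hc2 : ∀ x, ∫ p, φ x p.1 p.2 ∂(μ.prod μ) = 0)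
    (hG : ∫ x, (Real.exp (6 * F x) - 1 - 6 * F x) ∂μ ≤ 3/8) :
    ∫ x : Fin N → Ω, Real.exp (2 * ((1 / (N:ℝ) ^ 2) *
      ∑ e : Fin 3 ↪ Fin N, φ (x (e 0)) (x (e 1)) (x (e 2)))) ∂(Measure.pi fun _ => μ) ≤ 2 := by
  have hφ3 : ∀ {β : Type _} [MeasurableSpace β] {f g h : β → Ω}, Measurable f → Measurable g →
      Measurable h → Measurable fun x => φ (f x) (g x) (h x) := fun hf hg hh =>
    hφ.comp (hf.prodMk (hg.prodMk hh))
  have hN' : (0:ℝ) < N := by exact_mod_cast hN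
  rcases Nat.eq_zero_or_pos (N / 3) with hK0 | hK
  · have : IsEmpty (Fin 3 ↪ Fin N) := by
      refine ⟨fun e => ?_⟩
      have := Fintype.card_le_of_embedding e
      simp at this
      omega
    simp
  set K := N / 3 with hKdef
  have hK' : (0:ℝ) < K := by exact_mod_cast hK
  set c : ℝ := (Fintype.card (Fin 3 ↪ Fin N) : ℝ) with hc
  have hcval : c = N * (N - 1) * (N - 2) := by
    rw [hc, Fintype.card_embedding_eq]
    simp only [Fintype.card_fin, Nat.descFactorial]
    obtain ⟨n, rfl⟩ : ∃ n, N = n + 2 := ⟨N - 2, by omega⟩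
    push_cast
    simp
    ring
  have hN3 : (3:ℝ) ≤ N := by exact_mod_cast (by omega : 3 ≤ N)
  have hNK : (N:ℝ) ≤ 3 * K + 2 := by exact_mod_cast (by omega : N ≤ 3 * K + 2)
  have hcpos : 0 < c := by
    rw [hcval]
    have h1 : (0:ℝ) < N - 1 := by linarith
    have h2 : (0:ℝ) < N - 2 := by linarith
    positivity
  set τ : ℝ := c / (3 * K * N ^ 2) with hτ
  have hτ0 : 0 ≤ τ := by positivity
  have hτ1 : τ ≤ 1 := by
    rw [hτ, div_le_one (by positivity), hcval]
    have h1 : (N:ℝ) * (N - 1) ≤ N * N := by nlinarith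
    calc (N:ℝ) * (N - 1) * (N - 2) ≤ (N * N) * (N - 2) :=
          mul_le_mul_of_nonneg_right h1 (by linarith)
      _ ≤ (N * N) * (3 * K) := mul_le_mul_of_nonneg_left (by linarith) (by positivity)
      _ = _ := by ring
  obtain ⟨g⟩ : Nonempty (Fin K ⊕ (Fin K ⊕ Fin K) ↪ Fin N) := by
    apply Function.Embedding.nonempty_of_card_le
    simp
    omega
  have hE : ∀ a b : Fin K, ∃ e : Fin 3 ↪ Fin N, e 0 = g (Sum.inl a) ∧
      e 1 = g (Sum.inr (Sum.inl b)) ∧ e 2 = g (Sum.inr (Sum.inr b)) := by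
    intro a b
    refine ⟨⟨![g (Sum.inl a), g (Sum.inr (Sum.inl b)), g (Sum.inr (Sum.inr b))], ?_⟩, rfl, rfl, rfl⟩
    intro i j hij
    fin_cases i <;> fin_cases j <;> simp at hij ⊢
  choose E hE0 hE1 hE2 using hE
  set B : (Fin K → Ω) × ((Fin K → Ω) × (Fin K → Ω)) → ℝ := fun q =>
    Real.exp ((6 / K) * ∑ a, ∑ b, τ * φ (q.1 a) (q.2.1 b) (q.2.2 b)) with hB
  have hBm : Measurable B := by
    apply Real.measurable_exp.comp
    apply Measurable.const_mul
    exact Finset.measurable_sum _ fun a _ => Finset.measurable_sum _ fun b _ =>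
        (hφ3 (by fun_prop) (by fun_prop) (by fun_prop)).const_mul _
  have hBb : ∀ q, |B q| ≤ Real.exp ((6 / K) * (K * (K * C))) := by
    intro q
    simp only [hB]
    rw [abs_of_pos (Real.exp_pos _)]
    apply Real.exp_le_exp.2
    refine mul_le_mul_of_nonneg_left ?_ (by positivity)
    calc _ ≤ ∑ a : Fin K, ∑ b : Fin K, C := by
            refine Finset.sum_le_sum fun a _ => Finset.sum_le_sum fun b _ => ?_
            calc τ * φ (q.1 a) (q.2.1 b) (q.2.2 b) ≤ τ * F (q.1 a) :=
                  mul_le_mul_of_nonneg_left ((le_abs_self _).trans (hφF _ _ _)) hτ0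
              _ ≤ F (q.1 a) := mul_le_of_le_one_left (hF0 _) hτ1
              _ ≤ C := hFC _
      _ = _ := by simp
  have hcore : ∫ q, B q ∂((Measure.pi fun _ => μ).prod
      ((Measure.pi fun _ => μ).prod (Measure.pi fun _ => μ))) ≤ 2 := by
    refine core μ K hK (fun x z z' => τ * φ x z z') (hφ.const_mul _) F hF hF0 C hFC ?_ ?_ ?_ hG
    · intro x z z'
      rw [abs_mul, abs_of_nonneg hτ0]
      exact (mul_le_of_le_one_left (abs_nonneg _) hτ1).trans (hφF x z z')
    · intro z z'; rw [integral_const_mul, hc1, mul_zero]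
    · intro x; rw [integral_const_mul, hc2, mul_zero]
  let T : Equiv.Perm (Fin N) → (Fin N → Ω) → (Fin K → Ω) × ((Fin K → Ω) × (Fin K → Ω)) :=
    fun σ x => (fun a => x (σ (g (Sum.inl a))),
        (fun b => x (σ (g (Sum.inr (Sum.inl b)))), fun b => x (σ (g (Sum.inr (Sum.inr b))))))
  have hT : ∀ σ, MeasurePreserving (T σ) (Measure.pi fun _ => μ) ((Measure.pi fun _ => μ).prod
      ((Measure.pi fun _ => μ).prod (Measure.pi fun _ => μ))) := fun σ =>
    split_preserving μ K (fun i => σ (g i)) (σ.injective.comp g.injective)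
  have hTi : ∀ σ, ∫ x, B (T σ x) ∂(Measure.pi fun _ => μ) ≤ 2 := by
    intro σ
    rw [← integral_map (hT σ).measurable.aemeasurable hBm.aestronglyMeasurable, (hT σ).map_eq]
    exact hcore
  set P : ℝ := (Fintype.card (Equiv.Perm (Fin N)) : ℝ) with hP
  have hPpos : 0 < P := by rw [hP]; exact_mod_cast Fintype.card_pos
  have hint : ∀ σ, Integrable (fun x => B (T σ x)) (Measure.pi fun _ => μ) := fun σ =>
    ibm (hBm.comp (hT σ).measurable) _ fun x => hBb _
  have hpt : ∀ x : Fin N → Ω, Real.exp (2 * ((1 / (N:ℝ) ^ 2) *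
      ∑ e : Fin 3 ↪ Fin N, φ (x (e 0)) (x (e 1)) (x (e 2)))) ≤ ∑ σ, P⁻¹ * B (T σ x) := by
    intro x
    have hav : ∀ a b, ∑ e : Fin 3 ↪ Fin N, φ (x (e 0)) (x (e 1)) (x (e 2)) = P⁻¹ * c *
        ∑ σ : Equiv.Perm (Fin N), φ (x (σ (g (Sum.inl a)))) (x (σ (g (Sum.inr (Sum.inl b)))))
          (x (σ (g (Sum.inr (Sum.inr b))))) := by
      intro a b
      have := perm_avg (fun i j k => φ (x i) (x j) (x k)) (E a b)
      rw [hE0, hE1, hE2] at this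
      rw [mul_assoc, eq_inv_mul_iff_mul_eq₀ hPpos.ne']
      exact this.symm
    have hsum : 2 * ((1 / (N:ℝ) ^ 2) * ∑ e : Fin 3 ↪ Fin N, φ (x (e 0)) (x (e 1)) (x (e 2)))
        = ∑ σ : Equiv.Perm (Fin N), P⁻¹ * ((6 / K) * ∑ a, ∑ b, τ * φ ((T σ x).1 a)
          ((T σ x).2.1 b) ((T σ x).2.2 b)) := by
      set S := ∑ e : Fin 3 ↪ Fin N, φ (x (e 0)) (x (e 1)) (x (e 2)) with hS
      have h1 : ∑ σ : Equiv.Perm (Fin N), ∑ a : Fin K, ∑ b : Fin K, φ ((T σ x).1 a)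
          ((T σ x).2.1 b) ((T σ x).2.2 b) = K * (K * (c⁻¹ * (P * S))) := by
        rw [Finset.sum_comm]
        have : ∀ a : Fin K, ∑ σ : Equiv.Perm (Fin N), ∑ b : Fin K, φ ((T σ x).1 a)
          ((T σ x).2.1 b) ((T σ x).2.2 b) = K * (c⁻¹ * (P * S)) := by
          intro a
          rw [Finset.sum_comm]
          have h2 : ∀ b : Fin K, ∑ σ : Equiv.Perm (Fin N), φ ((T σ x).1 a)
              ((T σ x).2.1 b) ((T σ x).2.2 b) = c⁻¹ * (P * S) := by
            intro b
            rw [hav a b, mul_assoc P⁻¹, mul_inv_cancel_left₀ hPpos.ne',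
              inv_mul_cancel_left₀ hcpos.ne']
          simp [h2]
        simp [this]
      simp only [← Finset.mul_sum]
      rw [h1, hτ]
      field_simp
      ring
    rw [hsum]
    have := convexOn_exp.map_sum_le (t := (Finset.univ : Finset (Equiv.Perm (Fin N))))
      (w := fun _ => P⁻¹) (p := fun σ => ((6 / K) * ∑ a, ∑ b, τ * φ ((T σ x).1 a)
          ((T σ x).2.1 b) ((T σ x).2.2 b))) (fun _ _ => by positivity)
      (by simp [hP]) (fun _ _ => Set.mem_univ _)
    simpa only [smul_eq_mul] using this
  calc _ ≤ ∫ x, ∑ σ, P⁻¹ * B (T σ x) ∂(Measure.pi fun _ => μ) := by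
        apply integral_mono_of_nonneg (ae_of_all _ fun x => (Real.exp_pos _).le)
        · exact integrable_finsetSum _ fun σ _ => (hint σ).const_mul _
        · exact ae_of_all _ hpt
    _ = ∑ σ, P⁻¹ * ∫ x, B (T σ x) ∂(Measure.pi fun _ => μ) := by
        rw [integral_finsetSum _ fun σ _ => (hint σ).const_mul _]
        simp only [integral_const_mul]
    _ ≤ ∑ σ : Equiv.Perm (Fin N), P⁻¹ * 2 := Finset.sum_le_sum fun σ _ =>
        mul_le_mul_of_nonneg_left (hTi σ) (by positivity)
    _ = 2 := by
        rw [Finset.sum_const, Finset.card_univ, nsmul_eq_mul, ← hP]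
        field_simp

theorem sum_emb (N : ℕ) (f : Fin N → Fin N → Fin N → ℝ) :
    ∑ e : Fin 3 ↪ Fin N, f (e 0) (e 1) (e 2) =
      ∑ i, ∑ j, ∑ k, if i ≠ j ∧ i ≠ k ∧ j ≠ k then f i j k else 0 := by
  simp only [← Fintype.sum_prod_type']
  rw [← Finset.sum_filter]
  refine Finset.sum_bij (fun e _ => ((e 0, e 1, e 2) : Fin N × Fin N × Fin N)) ?_ ?_ ?_ ?_
  · intro e _
    simp
  · intro e _ e' _ h
    simp only [Prod.mk.injEq] at h
    ext i
    fin_cases i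
    · exact congrArg _ h.1
    · exact congrArg _ h.2.1
    · exact congrArg _ h.2.2
  · rintro ⟨i, j, k⟩ h
    simp only [Finset.mem_filter, Finset.mem_univ, true_and] at h
    obtain ⟨h1, h2, h3⟩ := h
    refine ⟨⟨![i, j, k], ?_⟩, Finset.mem_univ _, rfl⟩
    intro a b hab
    fin_cases a <;> fin_cases b <;> simp_all
  · intro e _
    rfl

theorem sum_diag (N : ℕ) (f : Fin N → Fin N → Fin N → ℝ) (F : Fin N → ℝ)
    (h : ∀ i j k, |f i j k| ≤ F i) :
    ∑ i, ∑ j, ∑ k, f i j k ≤ ∑ e : Fin 3 ↪ Fin N, f (e 0) (e 1) (e 2) + 3 * N * ∑ i, F i := by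
  rw [sum_emb]
  have h1 : ∀ i j k, f i j k ≤ (if i ≠ j ∧ i ≠ k ∧ j ≠ k then f i j k else 0) +
      ((if i = j then F i else 0) + (if i = k then F i else 0) + (if j = k then F i else 0)) := by
    intro i j k
    have h2 := (le_abs_self _).trans (h i j k)
    have h3 := (abs_nonneg _).trans (h i j k)
    split_ifs <;> first | linarith | tauto
  have h4 : ∑ i : Fin N, ∑ j : Fin N, ∑ k : Fin N,
      ((if i = j then F i else 0) + (if i = k then F i else 0) + (if j = k then F i else 0))
      = 3 * N * ∑ i, F i := by
    simp [Finset.sum_add_distrib, ← Finset.mul_sum]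
    ring
  rw [← h4]
  simp only [← Finset.sum_add_distrib]
  exact Finset.sum_le_sum fun i _ => Finset.sum_le_sum fun j _ => Finset.sum_le_sum fun k _ =>
    h1 i j k

theorem main_abs (μ : Measure Ω) [IsProbabilityMeasure μ] (N : ℕ) (hN : 0 < N)
    (φ : Ω → Ω → Ω → ℝ) (hφ : Measurable fun p : Ω × Ω × Ω => φ p.1 p.2.1 p.2.2)
    (F : Ω → ℝ) (hF : Measurable F) (hF0 : ∀ x, 0 ≤ F x) (C : ℝ) (hFC : ∀ x, F x ≤ C)
    (hφF : ∀ x z z', |φ x z z'| ≤ F x)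
    (hc1 : ∀ z z', ∫ x, φ x z z' ∂μ = 0)
    (hc2 : ∀ x, ∫ p, φ x p.1 p.2 ∂(μ.prod μ) = 0)
    (hG : ∫ x, (Real.exp (6 * F x) - 1 - 6 * F x) ∂μ ≤ 3/8)
    (hE : ∫ x, Real.exp (6 * F x) ∂μ ≤ 2) :
    ∫ x : Fin N → Ω, Real.exp ((1 / (N:ℝ) ^ 2) *
      ∑ i, ∑ j, ∑ k, φ (x i) (x j) (x k)) ∂(Measure.pi fun _ => μ) ≤ 2 := by
  have hφ3 : ∀ {β : Type _} [MeasurableSpace β] {f g h : β → Ω}, Measurable f → Measurable g →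
      Measurable h → Measurable fun x => φ (f x) (g x) (h x) := fun hf hg hh =>
    hφ.comp (hf.prodMk (hg.prodMk hh))
  have hN' : (0:ℝ) < N := by exact_mod_cast hN
  have hod := offdiag μ N hN φ hφ F hF hF0 C hFC hφF hc1 hc2 hG
  set U : (Fin N → Ω) → ℝ := fun x => (1 / (N:ℝ) ^ 2) *
      ∑ e : Fin 3 ↪ Fin N, φ (x (e 0)) (x (e 1)) (x (e 2)) with hU
  have hUm : Measurable U := by
    apply Measurable.const_mul
    exact Finset.measurable_sum _ fun e _ => hφ3 (by fun_prop) (by fun_prop) (by fun_prop)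
  have hUb : ∀ x, U x ≤ (1 / (N:ℝ) ^ 2) * (Fintype.card (Fin 3 ↪ Fin N) * C) := by
    intro x
    refine mul_le_mul_of_nonneg_left ?_ (by positivity)
    calc _ ≤ ∑ e : Fin 3 ↪ Fin N, C := Finset.sum_le_sum fun e _ =>
            (le_abs_self _).trans ((hφF _ _ _).trans (hFC _))
      _ = _ := by rw [Finset.sum_const, Finset.card_univ, nsmul_eq_mul]
  set V : (Fin N → Ω) → ℝ := fun x => (1 / (N:ℝ)) * ∑ i, Real.exp (6 * F (x i)) with hV
  have hEi : Integrable (fun x => Real.exp (6 * F x)) μ :=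
    ibm (by fun_prop) (Real.exp (6 * C)) fun x => by
      rw [abs_of_pos (Real.exp_pos _)]; exact Real.exp_le_exp.2 (by linarith [hFC x])
  have hEi' : ∀ i : Fin N, Integrable (fun x : Fin N → Ω => Real.exp (6 * F (x i)))
      (Measure.pi fun _ => μ) := fun i =>
    (measurePreserving_eval (fun _ : Fin N => μ) i).integrable_comp_of_integrable hEi
  have hEe : ∀ i : Fin N, ∫ x : Fin N → Ω, Real.exp (6 * F (x i)) ∂(Measure.pi fun _ => μ)
      = ∫ x, Real.exp (6 * F x) ∂μ := fun i => by
    have := (measurePreserving_eval (fun _ : Fin N => μ) i).map_eq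
    conv_rhs => rw [← this]
    rw [integral_map (measurable_pi_apply i).aemeasurable (by
      have : Measurable fun x => Real.exp (6 * F x) := by fun_prop
      exact this.aestronglyMeasurable)]
  have hVi : Integrable V (Measure.pi fun _ => μ) :=
    (integrable_finsetSum _ fun i _ => hEi' i).const_mul _
  have hVe : ∫ x, V x ∂(Measure.pi fun _ => μ) ≤ 2 := by
    simp only [hV]
    rw [integral_const_mul, integral_finsetSum _ fun i _ => hEi' i]
    simp only [hEe]
    rw [Finset.sum_const, Finset.card_univ, Fintype.card_fin, nsmul_eq_mul, ← mul_assoc,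
      one_div_mul_cancel hN'.ne', one_mul]
    exact hE
  have hUi : Integrable (fun x => Real.exp (2 * U x)) (Measure.pi fun _ : Fin N => μ) :=
    ibm (by fun_prop) (Real.exp (2 * ((1 / (N:ℝ) ^ 2) * (Fintype.card (Fin 3 ↪ Fin N) * C))))
      fun x => by
        rw [abs_of_pos (Real.exp_pos _)]; exact Real.exp_le_exp.2 (by linarith [hUb x])
  calc _ ≤ ∫ x, (1/2 * Real.exp (2 * U x) + 1/2 * V x) ∂(Measure.pi fun _ => μ) := by
        apply integral_mono_of_nonneg (ae_of_all _ fun x => (Real.exp_pos _).le)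
        · exact (hUi.const_mul _).add (hVi.const_mul _)
        · refine ae_of_all _ fun x => ?_
          change Real.exp _ ≤ 1/2 * Real.exp (2 * U x) + 1/2 * V x
          set W := (1 / (N:ℝ)) * ∑ i, 3 * F (x i) with hW
          have q1 : (1 / (N:ℝ) ^ 2) * ∑ i, ∑ j, ∑ k, φ (x i) (x j) (x k) ≤ U x + W := by
            have := sum_diag N (fun i j k => φ (x i) (x j) (x k)) (fun i => F (x i))
              fun i j k => hφF _ _ _
            calc _ ≤ (1 / (N:ℝ) ^ 2) * _ := mul_le_mul_of_nonneg_left this (by positivity)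
              _ = _ := by
                simp only [hU, hW, ← Finset.mul_sum]
                field_simp
          have q2 : Real.exp (2 * W) ≤ V x := by
            have := convexOn_exp.map_sum_le (t := Finset.univ) (w := fun _ : Fin N => 1 / (N:ℝ))
              (p := fun i => 6 * F (x i)) (fun _ _ => by positivity)
              (by simp [hN'.ne']) (fun _ _ => Set.mem_univ _)
            simp only [smul_eq_mul, ← Finset.mul_sum] at this
            have e : 2 * W = 1 / (N:ℝ) * (6 * ∑ i, F (x i)) := by
              simp only [hW, ← Finset.mul_sum]
              ring
            rw [e]
            exact this
          have q3 : Real.exp (U x + W) ≤ 1/2 * Real.exp (2 * U x) + 1/2 * Real.exp (2 * W) := by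
            rw [Real.exp_add, two_mul, two_mul, Real.exp_add, Real.exp_add]
            nlinarith [sq_nonneg (Real.exp (U x) - Real.exp W)]
          linarith [Real.exp_le_exp.2 q1]
    _ = 1/2 * ∫ x, Real.exp (2 * U x) ∂(Measure.pi fun _ => μ)
        + 1/2 * ∫ x, V x ∂(Measure.pi fun _ => μ) := by
        rw [integral_add (hUi.const_mul _) (hVi.const_mul _), integral_const_mul,
          integral_const_mul]
    _ ≤ 2 := by linarith

theorem integral_dens (ν : Measure Ω) (ρ : Ω → ℝ) (hρ : Measurable ρ) (hρ0 : ∀ x, 0 ≤ ρ x)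
    (g : Ω → ℝ) :
    ∫ x, g x ∂(ν.withDensity fun x => ENNReal.ofReal (ρ x)) = ∫ x, g x * ρ x ∂ν := by
  rw [integral_withDensity_eq_integral_toReal_smul (by fun_prop)
    (ae_of_all _ fun x => ENNReal.ofReal_lt_top)]
  congr 1
  funext x
  rw [ENNReal.toReal_ofReal (hρ0 x), smul_eq_mul, mul_comm]

theorem pi_dens (ν : Measure Ω) [SigmaFinite ν] (ρ : Ω → ℝ) (hρ : Measurable ρ)
    (hρ0 : ∀ x, 0 ≤ ρ x) (hi : Integrable ρ ν) (N : ℕ)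
    [SigmaFinite (ν.withDensity fun x => ENNReal.ofReal (ρ x))] :
    Measure.pi (fun _ : Fin N => ν.withDensity fun x => ENNReal.ofReal (ρ x)) =
      (Measure.pi fun _ : Fin N => ν).withDensity fun x => ENNReal.ofReal (∏ s, ρ (x s)) := by
  refine Measure.pi_eq fun S hS => ?_
  rw [withDensity_apply _ (MeasurableSet.univ_pi hS), Measure.restrict_pi_pi,
    ← ofReal_integral_eq_lintegral_ofReal, integral_fintype_prod_eq_prod (fun _ => ρ),
    ENNReal.ofReal_prod_of_nonneg]
  · refine Finset.prod_congr rfl fun i _ => ?_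
    rw [withDensity_apply _ (hS i), ofReal_integral_eq_lintegral_ofReal hi.integrableOn
      (ae_of_all _ hρ0)]
  · exact fun i _ => integral_nonneg hρ0
  · exact Integrable.fintype_prod (f := fun _ => ρ) fun i => hi.integrableOn
  · exact ae_of_all _ fun x => Finset.prod_nonneg fun i _ => hρ0 _

end

theorem lhs_bound {d N : ℕ} (hN : 0 < N)
    (ρ : Torus d → ℝ) (hρmeas : Measurable ρ) (hρ0 : ∀ x, 0 ≤ ρ x)
    (hρ1 : ∫ x : Torus d, ρ x = 1)
    (φ : Torus d → Torus d → Torus d → ℝ)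
    (hφmeas : Measurable fun p : Torus d × Torus d × Torus d => φ p.1 p.2.1 p.2.2)
    (C : ℝ) (hφbdd : ∀ x z z', |φ x z z'| ≤ C)
    (hcancel1 : ∀ z z', ∫ x : Torus d, φ x z z' * ρ x = 0)
    (hcancel2 : ∀ x, ∫ z : Torus d, ∫ z' : Torus d, φ x z z' * (ρ z * ρ z') = 0)
    (hs0 : 0 ≤ Msup ρ φ)
    (hS : Msup ρ φ < 1 / (6 * Real.exp 1 ^ 2)) :
    ∫ X : Fin N → Torus d,
        Real.exp ((1 / (N : ℝ) ^ 2) * ∑ i : Fin N, ∑ j : Fin N, ∑ k : Fin N,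
          φ (X i) (X j) (X k)) * ∏ s, ρ (X s) ≤ 2 := by
  have hi : Integrable ρ (volume : Measure (Torus d)) := by
    by_contra h
    rw [integral_undef h] at hρ1
    norm_num at hρ1
  set μ : Measure (Torus d) := volume.withDensity fun x => ENNReal.ofReal (ρ x) with hμ
  have hprob : IsProbabilityMeasure μ := by
    refine ⟨?_⟩
    rw [hμ, withDensity_apply _ MeasurableSet.univ, Measure.restrict_univ,
      ← ofReal_integral_eq_lintegral_ofReal hi (ae_of_all _ hρ0), hρ1, ENNReal.ofReal_one]
  have hC0 : 0 ≤ C := (abs_nonneg _).trans (hφbdd 0 0 0)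
  obtain ⟨F, hF, hF0, hFC, hφF, hFS⟩ := exists_majorant μ φ hφmeas C hφbdd
  have hid := integral_dens (volume : Measure (Torus d)) ρ hρmeas hρ0
  have hMp : ∀ p : ℝ, Mp ρ φ p = (∫ x, F x ^ p ∂μ) ^ (1 / p) := by
    intro p
    rw [Mp, ← hid]
    congr 1
    refine integral_congr_ae ?_
    filter_upwards [hFS] with x hx
    rw [hx]
  have hI0 : ∀ p : ℝ, 0 ≤ ∫ x, F x ^ p ∂μ := fun p =>
    integral_nonneg fun x => Real.rpow_nonneg (hF0 x) p
  have hbd : BddAbove (Set.range fun p : {p : ℝ // 1 ≤ p} => Mp ρ φ (p : ℝ) / (p : ℝ)) := by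
    refine ⟨C, ?_⟩
    rintro _ ⟨⟨p, hp⟩, rfl⟩
    have hp0 : 0 < p := by linarith
    change Mp ρ φ p / p ≤ C
    have h1 : ∫ x, F x ^ p ∂μ ≤ C ^ p := by
      calc _ ≤ ∫ x, C ^ p ∂μ := integral_mono_of_nonneg
              (ae_of_all _ fun x => Real.rpow_nonneg (hF0 x) p) (integrable_const _)
              (ae_of_all _ fun x => Real.rpow_le_rpow (hF0 x) (hFC x) hp0.le)
        _ = C ^ p := by simp
    have h2 : Mp ρ φ p ≤ C := by
      rw [hMp]
      calc _ ≤ (C ^ p) ^ (1 / p) := Real.rpow_le_rpow (hI0 p) h1 (by positivity)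
        _ = C := by rw [← Real.rpow_mul hC0, mul_one_div_cancel hp0.ne', Real.rpow_one]
    exact (div_le_of_le_mul₀ hp0.le hC0 (h2.trans (le_mul_of_one_le_right hC0 hp)))
  have hmom : ∀ k : ℕ, 1 ≤ k → ∫ x, F x ^ k ∂μ ≤ (k * Msup ρ φ) ^ k := by
    intro k hk
    have hk1 : (1:ℝ) ≤ k := by exact_mod_cast hk
    have hk0 : (0:ℝ) < k := by linarith
    have h1 : Mp ρ φ k / k ≤ Msup ρ φ := le_ciSup hbd ⟨(k:ℝ), hk1⟩
    rw [div_le_iff₀ hk0, hMp, mul_comm] at h1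
    have h2 := Real.rpow_le_rpow (Real.rpow_nonneg (hI0 k) _) h1 hk0.le
    rw [← Real.rpow_mul (hI0 k), one_div_mul_cancel hk0.ne', Real.rpow_one,
      Real.rpow_natCast] at h2
    simpa only [Real.rpow_natCast] using h2
  obtain ⟨hG, hE⟩ := moments μ F hF hF0 C hFC _ hs0 hS hmom
  have hc1 : ∀ z z', ∫ x, φ x z z' ∂μ = 0 := fun z z' => by
    rw [hid]; exact hcancel1 z z'
  have hc2 : ∀ x, ∫ p, φ x p.1 p.2 ∂(μ.prod μ) = 0 := by
    intro x
    have hm : Measurable fun p : Torus d × Torus d => φ x p.1 p.2 :=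
      hφmeas.comp (measurable_const.prodMk measurable_id)
    rw [integral_prod _ (ibm hm C fun p => hφbdd _ _ _), hid]
    rw [← hcancel2 x]
    congr 1
    funext z
    rw [hid, ← integral_mul_const]
    congr 1
    funext z'
    ring
  have hmain := main_abs μ N hN φ hφmeas F hF hF0 C hFC hφF hc1 hc2 hG hE
  rw [hμ, pi_dens (volume : Measure (Torus d)) ρ hρmeas hρ0 hi N, integral_dens _ _ (by fun_prop)
    (fun x => Finset.prod_nonneg fun i _ => hρ0 _)] at hmain
  exact hmain

/-- Theorem 1.8 (exponential law of large numbers / large deviation estimate):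
if `φ` satisfies both cancellations and `sup_{p≥1} M_p/p < 1/(6e²)`, then uniformly in `N`,
`∫ ρ̄^{⊗N} exp(N^{−2} ∑_{i,j,k} φ(x_i,x_j,x_k)) ≤ 2(1 + 4α/(1−α)³ + 1/(1−β))`
with `α = (√(32e³) sup M_p/p)² < 1` and `β = (3e² sup M_p/p)² < 1`. -/
theorem stmt17 {d N : ℕ} (hd : 0 < d) (hN : 0 < N)
    (ρ : Torus d → ℝ) (hρmeas : Measurable ρ) (hρ0 : ∀ x, 0 ≤ ρ x)
    (hρ1 : ∫ x : Torus d, ρ x = 1)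
    (φ : Torus d → Torus d → Torus d → ℝ)
    (hφmeas : Measurable fun p : Torus d × Torus d × Torus d => φ p.1 p.2.1 p.2.2)
    (C : ℝ) (hφbdd : ∀ x z z', |φ x z z'| ≤ C)
    (hcancel1 : ∀ z z', ∫ x : Torus d, φ x z z' * ρ x = 0)
    (hcancel2 : ∀ x, ∫ z : Torus d, ∫ z' : Torus d, φ x z z' * (ρ z * ρ z') = 0)
    (hS : Msup ρ φ < 1 / (6 * Real.exp 1 ^ 2)) :
    (Real.sqrt (32 * Real.exp 1 ^ 3) * Msup ρ φ) ^ 2 < 1 ∧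
    (3 * Real.exp 1 ^ 2 * Msup ρ φ) ^ 2 < 1 ∧
    ∫ X : Fin N → Torus d,
        Real.exp ((1 / (N : ℝ) ^ 2) * ∑ i : Fin N, ∑ j : Fin N, ∑ k : Fin N,
          φ (X i) (X j) (X k)) * ∏ s, ρ (X s)
      ≤ 2 * (1 + 4 * (Real.sqrt (32 * Real.exp 1 ^ 3) * Msup ρ φ) ^ 2 /
              (1 - (Real.sqrt (32 * Real.exp 1 ^ 3) * Msup ρ φ) ^ 2) ^ 3
            + 1 / (1 - (3 * Real.exp 1 ^ 2 * Msup ρ φ) ^ 2)) := by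
  have hs0 : 0 ≤ Msup ρ φ := by
    refine Real.iSup_nonneg fun p => ?_
    have hp : (0:ℝ) ≤ p := by linarith [p.2]
    refine div_nonneg (Real.rpow_nonneg (integral_nonneg fun x => ?_) _) hp
    refine mul_nonneg (Real.rpow_nonneg ?_ _) (hρ0 x)
    exact Real.iSup_nonneg fun z => Real.iSup_nonneg fun z' => abs_nonneg _
  have hL := lhs_bound hN ρ hρmeas hρ0 hρ1 φ hφmeas C hφbdd hcancel1 hcancel2 hs0 hS
  have he : (5/2 : ℝ) < Real.exp 1 := by linarith [Real.exp_one_gt_d9]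
  set e := Real.exp 1
  set s := Msup ρ φ
  have hes : e ^ 2 * s < 1/6 := by
    rw [lt_div_iff₀ (by positivity)] at hS
    linarith
  have hes0 : 0 ≤ e ^ 2 * s := by positivity
  have hA : (Real.sqrt (32 * e ^ 3) * s) ^ 2 < 1 := by
    rw [mul_pow, Real.sq_sqrt (by positivity)]
    have h1 : e * (32 * e ^ 3 * s ^ 2) < 1 := by
      have : e * (32 * e ^ 3 * s ^ 2) = 32 * (e ^ 2 * s) ^ 2 := by ring
      rw [this]
      nlinarith
    have h2 : 0 ≤ 32 * e ^ 3 * s ^ 2 := by positivity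
    nlinarith
  have hB : (3 * e ^ 2 * s) ^ 2 < 1 := by
    have : (3 * e ^ 2 * s) ^ 2 = 9 * (e ^ 2 * s) ^ 2 := by ring
    rw [this]
    nlinarith
  refine ⟨hA, hB, hL.trans ?_⟩
  set a := (Real.sqrt (32 * e ^ 3) * s) ^ 2 with ha
  set b := (3 * e ^ 2 * s) ^ 2 with hb
  have ha0 : 0 ≤ a := sq_nonneg _
  have h1 : 0 ≤ 4 * a / (1 - a) ^ 3 :=
    div_nonneg (by linarith) (pow_nonneg (by linarith) 3)
  have h2 : 0 ≤ 1 / (1 - b) := div_nonneg zero_le_one (by linarith)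
  linarith
end
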